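/- arXiv:1308.0454 — 2 statements merged into one kernel-verified Lean document; each statement's English description precedes it below -/
import Mathlib

section
/- Let [ξ, ξ'] = {ξ + λe^J : 0 ≤ λ ≤ μ} (with μ > 0) be an ordinary segment of the tropical edge E_K whose endpoint ξ' is a breakpoint, and let k be the hyperplane node of D_{ξ'} with degree (2,1) or (1,2). Then: (a) D_{ξ'} = D_{]ξ,ξ'[} ∪ {a_ent}, where D_{]ξ,ξ'[} is the common tangent digraph of the points of the open segment and a_ent is an arc between k and the unique element ℓ of argmax_{j∈J}(|W|_{kj} + ξ_j), directed from ℓ to k if λ⁺_k(ξ,J) < λ⁻_k(ξ,J) and from k to ℓ otherwise; (b) if [ξ', ξ''] is the next ordinary segment of E_K, then D_{]ξ',ξ''[} = D_{ξ'} ∖ {a_lev}, where a_lev is the unique arc incident to k in D_{ξ'} other than a_ent having the same orientation (toward or away from k) as a_ent; (c) the direction set J' of [ξ', ξ''] = {ξ' + λe^{J'} : 0 ≤ λ ≤ μ'} equals the set of coordinate nodes weakly connected to k in D_{ξ'} ∖ {a_lev}. -/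
open scoped Classical

noncomputable section

/-- The tropical semiring `ℝ ∪ {−∞}` with max as addition, + as multiplication. -/
abbrev TT : Type := WithBot ℝ

/-- Tropical dot product `max_j (a j + x j)`. -/
def tdot {n : ℕ} (a x : Fin n → TT) : TT :=
  Finset.univ.sup fun j => a j + x j

/-- Tropical permanent of a square matrix over `TT`. -/
def tper {q : ℕ} (M : Fin q → Fin q → TT) : TT :=
  Finset.univ.sup fun σ : Equiv.Perm (Fin q) => ∑ i, M i (σ i)

/-- A square tropical matrix is tropically singular. -/
def TropSingular {q : ℕ} (M : Fin q → Fin q → TT) : Prop :=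
  tper M = ⊥ ∨ ∃ σ π : Equiv.Perm (Fin q), σ ≠ π ∧
    (∑ i, M i (σ i)) = tper M ∧ (∑ i, M i (π i)) = tper M

/-- An (unsigned) tropical matrix is tropically generic. -/
def TropGeneric {m n : ℕ} (M : Fin m → Fin n → TT) : Prop :=
  ∀ (q : ℕ) (r : Fin q → Fin m) (c : Fin q → Fin n),
    Function.Injective r → Function.Injective c →
    tper (fun i j => M (r i) (c j)) = ⊥ ∨ ¬ TropSingular (fun i j => M (r i) (c j))

/-- sign of an entry of a signed tropical matrix. -/
def esign (ap an : TT) : ℤ :=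
  if ap ≠ ⊥ then 1 else if an ≠ ⊥ then -1 else 0

/-- A signed square tropical matrix (pair of matrices) is tropically sign singular. -/
def TropSignSingular {q : ℕ} (Mp Mn : Fin q → Fin q → TT) : Prop :=
  tper (fun i j => max (Mp i j) (Mn i j)) = ⊥ ∨
  ∃ σ π : Equiv.Perm (Fin q),
    (∑ i, max (Mp i (σ i)) (Mn i (σ i))) = tper (fun i j => max (Mp i j) (Mn i j)) ∧
    (∑ i, max (Mp i (π i)) (Mn i (π i))) = tper (fun i j => max (Mp i j) (Mn i j)) ∧
    ((Equiv.Perm.sign σ : ℤ) * ∏ i, esign (Mp i (σ i)) (Mn i (σ i)))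
      ≠ ((Equiv.Perm.sign π : ℤ) * ∏ i, esign (Mp i (π i)) (Mn i (π i)))

/-- A signed tropical matrix is tropically sign generic. -/
def TropSignGeneric {m n : ℕ} (Mp Mn : Fin m → Fin n → TT) : Prop :=
  ∀ (q : ℕ) (r : Fin q → Fin m) (c : Fin q → Fin n),
    Function.Injective r → Function.Injective c →
    tper (fun i j => max (Mp (r i) (c j)) (Mn (r i) (c j))) = ⊥ ∨
    ¬ TropSignSingular (fun i j => Mp (r i) (c j)) (fun i j => Mn (r i) (c j))

/-- Tropical polyhedron `P(A,b)` given by a signed matrix/vector. -/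
def tropP {m n : ℕ} (Ap An : Fin m → Fin n → TT) (bp bn : Fin m → TT) :
    Set (Fin n → TT) :=
  {x | ∀ i, max (tdot (An i) x) (bn i) ≤ max (tdot (Ap i) x) (bp i)}


section Tangent

variable {m n : ℕ} (Wp Wn : Fin m → Fin (n + 1) → TT)

/-- Real vector viewed inside `T^{n+1}`. -/
def toT (x : Fin (n + 1) → ℝ) : Fin (n + 1) → TT := fun j => (x j : TT)

/-- Modulus of the signed matrix `W`. -/
def tmod : Fin m → Fin (n + 1) → TT := fun i j => max (Wp i j) (Wn i j)

/-- `i` is a hyperplane node of the tangent graph at `x`. -/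
def isHypNode (x : Fin (n + 1) → ℝ) (i : Fin m) : Prop :=
  tdot (Wp i) (toT x) = tdot (Wn i) (toT x) ∧ ⊥ < tdot (Wp i) (toT x)

/-- There is an edge between hyperplane node `i` and coordinate node `j`
in the tangent graph at `x`. -/
def isTEdge (x : Fin (n + 1) → ℝ) (i : Fin m) (j : Fin (n + 1)) : Prop :=
  isHypNode Wp Wn x i ∧ tmod Wp Wn i j + (x j : TT) = tdot (tmod Wp Wn i) (toT x)

/-- Vertices of the tangent (di)graph: hyperplane nodes on the left,
coordinate nodes on the right. -/
abbrev TGV (m n : ℕ) : Type := Sum (Fin m) (Fin (n + 1))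

/-- The (undirected) tangent graph at `x`. -/
def tangentGraph (x : Fin (n + 1) → ℝ) : SimpleGraph (TGV m n) :=
  SimpleGraph.fromRel fun u v =>
    match u, v with
    | Sum.inl i, Sum.inr j => isTEdge Wp Wn x i j
    | _, _ => False

/-- The arc relation of the tangent digraph at `x`: the edge between `i` and
`j` is directed from `j` to `i` when `W_{ij}` is tropically positive, and from
`i` to `j` when it is tropically negative. -/
def arcRel (x : Fin (n + 1) → ℝ) : TGV m n → TGV m n → Prop := fun u v =>
  match u, v with
  | Sum.inr j, Sum.inl i => isTEdge Wp Wn x i j ∧ Wp i j ≠ ⊥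
  | Sum.inl i, Sum.inr j => isTEdge Wp Wn x i j ∧ Wn i j ≠ ⊥
  | _, _ => False

end Tangent

section Pivot

variable {m n : ℕ}

/-- The tropical cone `C = {x : Wᵢ⁺⊙x ≥ Wᵢ⁻⊙x for all i}`. -/
def coneC (Wp Wn : Fin m → Fin (n + 1) → TT) : Set (Fin (n + 1) → TT) :=
  {x | ∀ i, tdot (Wn i) x ≤ tdot (Wp i) x}

/-- The `i`-th s-hyperplane `Hᵢ`. -/
def hypHS (Wp Wn : Fin m → Fin (n + 1) → TT) (i : Fin m) : Set (Fin (n + 1) → TT) :=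
  {x | tdot (Wp i) x = tdot (Wn i) x}

/-- The `i`-th half-space `Hᵢ^≥`. -/
def halfHS (Wp Wn : Fin m → Fin (n + 1) → TT) (i : Fin m) : Set (Fin (n + 1) → TT) :=
  {x | tdot (Wn i) x ≤ tdot (Wp i) x}

/-- The tropical edge `E_K = ⋂_{i ∈ K} Hᵢ ∩ C` (as a set). -/
def edgeEK (Wp Wn : Fin m → Fin (n + 1) → TT) (K : Finset (Fin m)) :
    Set (Fin (n + 1) → TT) :=
  {x | (∀ i ∈ K, x ∈ hypHS Wp Wn i) ∧ x ∈ coneC Wp Wn}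

/-- Indicator vector `e^J` of `J ⊆ [n+1]`. -/
def eJ (J : Finset (Fin (n + 1))) : Fin (n + 1) → ℝ := fun j => if j ∈ J then 1 else 0

/-- `e^J` (with `∅ ⊊ J ⊊ [n+1]`) is a feasible direction from `x` in `D`. -/
def Feasible (D : Set (Fin (n + 1) → TT)) (x : Fin (n + 1) → ℝ)
    (J : Finset (Fin (n + 1))) : Prop :=
  J ≠ ∅ ∧ J ≠ Finset.univ ∧
    ∃ μ : ℝ, 0 < μ ∧ ∀ lam : ℝ, 0 ≤ lam → lam ≤ μ → toT (x + lam • eJ J) ∈ D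

/-- `{ξ + λ e^J : 0 ≤ λ ≤ μ}` is an ordinary segment of the tropical edge
`E_K`: it is contained in `E_K` and is maximal in the direction `e^J`. -/
def IsOrdSeg (Wp Wn : Fin m → Fin (n + 1) → TT) (K : Finset (Fin m))
    (ξ : Fin (n + 1) → ℝ) (J : Finset (Fin (n + 1))) (μ : ℝ) : Prop :=
  0 < μ ∧ J ≠ ∅ ∧ J ≠ Finset.univ ∧
  (∀ lam : ℝ, 0 ≤ lam → lam ≤ μ → toT (ξ + lam • eJ J) ∈ edgeEK Wp Wn K) ∧
  (∀ ε : ℝ, 0 < ε → toT (ξ - ε • eJ J) ∉ edgeEK Wp Wn K) ∧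
  (∀ ε : ℝ, 0 < ε → toT (ξ + (μ + ε) • eJ J) ∉ edgeEK Wp Wn K)

/-- `x` is a breakpoint of `E_K`: an intermediate endpoint shared by two
consecutive ordinary segments. -/
def IsBreakpoint (Wp Wn : Fin m → Fin (n + 1) → TT) (K : Finset (Fin m))
    (x : Fin (n + 1) → ℝ) : Prop :=
  ∃ ξ J μ, IsOrdSeg Wp Wn K ξ J μ ∧ x = ξ + μ • eJ J ∧
    ∃ J' μ', IsOrdSeg Wp Wn K x J' μ' ∧ J ⊂ J'

/-- `x` lies in the relative interior of an ordinary segment of `E_K`. -/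
def InRelIntSeg (Wp Wn : Fin m → Fin (n + 1) → TT) (K : Finset (Fin m))
    (x : Fin (n + 1) → ℝ) : Prop :=
  ∃ ξ J μ, IsOrdSeg Wp Wn K ξ J μ ∧ ∃ lam : ℝ, 0 < lam ∧ lam < μ ∧ x = ξ + lam • eJ J

/-- Embedding of `TT = ℝ ∪ {−∞}` into `EReal`. -/
def tE : TT → EReal := WithBot.recBotCoe ⊥ (fun r => (r : EReal))

/-- `λ⁺_i(ξ,J) = (Wᵢ⁺⊙ξ) − max_{j∈J}(W⁺_{ij} + ξ_j)`, with `−(−∞) = +∞`. -/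
def lamP (Wp : Fin m → Fin (n + 1) → TT) (i : Fin m) (ξ : Fin (n + 1) → ℝ)
    (J : Finset (Fin (n + 1))) : EReal :=
  tE (tdot (Wp i) (toT ξ)) - tE (J.sup fun j => Wp i j + (ξ j : TT))

/-- `λ⁻_i(ξ,J) = (Wᵢ⁺⊙ξ) − max_{j∈J}(W⁻_{ij} + ξ_j)`, with `−(−∞) = +∞`. -/
def lamM (Wp Wn : Fin m → Fin (n + 1) → TT) (i : Fin m) (ξ : Fin (n + 1) → ℝ)
    (J : Finset (Fin (n + 1))) : EReal :=
  tE (tdot (Wp i) (toT ξ)) - tE (J.sup fun j => Wn i j + (ξ j : TT))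

/-- `argmax(Wᵢ⁺⊙ξ)`. -/
def argmaxP (Wp : Fin m → Fin (n + 1) → TT) (i : Fin m) (ξ : Fin (n + 1) → ℝ) :
    Set (Fin (n + 1)) :=
  {j | Wp i j + (ξ j : TT) = tdot (Wp i) (toT ξ)}

/-- `argmax(Wᵢ⁻⊙ξ)`. -/
def argmaxM (Wn : Fin m → Fin (n + 1) → TT) (i : Fin m) (ξ : Fin (n + 1) → ℝ) :
    Set (Fin (n + 1)) :=
  {j | Wn i j + (ξ j : TT) = tdot (Wn i) (toT ξ)}

/-- `Λ(ξ,J)`: candidate entering constraints. -/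
def entSet (Wp : Fin m → Fin (n + 1) → TT) (K : Finset (Fin m))
    (ξ : Fin (n + 1) → ℝ) (J : Finset (Fin (n + 1))) : Set (Fin m) :=
  {i | i ∉ K ∧ ∀ j ∈ J, j ∉ argmaxP Wp i ξ}

/-- `B(ξ,J)`: candidate breakpoint constraints. -/
def brkSet (Wp Wn : Fin m → Fin (n + 1) → TT) (K : Finset (Fin m))
    (ξ : Fin (n + 1) → ℝ) (J : Finset (Fin (n + 1))) : Set (Fin m) :=
  {i | i ∈ K ∧ (∀ j ∈ J, j ∉ argmaxP Wp i ξ) ∧ ∀ j ∈ J, j ∉ argmaxM Wn i ξ}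

/-- Coordinate nodes with an arc into hyperplane node `i`. -/
def degIn (Wp Wn : Fin m → Fin (n + 1) → TT) (x : Fin (n + 1) → ℝ) (i : Fin m) :
    Set (Fin (n + 1)) :=
  {j | arcRel Wp Wn x (Sum.inr j) (Sum.inl i)}

/-- Coordinate nodes with an arc out of hyperplane node `i`. -/
def degOut (Wp Wn : Fin m → Fin (n + 1) → TT) (x : Fin (n + 1) → ℝ) (i : Fin m) :
    Set (Fin (n + 1)) :=
  {j | arcRel Wp Wn x (Sum.inl i) (Sum.inr j)}

/-- Hyperplane node `i` has degree `(1,1)` in the tangent digraph at `x`. -/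
def deg11 (Wp Wn : Fin m → Fin (n + 1) → TT) (x : Fin (n + 1) → ℝ) (i : Fin m) : Prop :=
  (∃! j, j ∈ degIn Wp Wn x i) ∧ (∃! j, j ∈ degOut Wp Wn x i)

/-- Hyperplane node `i` has degree `(2,1)`. -/
def deg21 (Wp Wn : Fin m → Fin (n + 1) → TT) (x : Fin (n + 1) → ℝ) (i : Fin m) : Prop :=
  (degIn Wp Wn x i).ncard = 2 ∧ (∃! j, j ∈ degOut Wp Wn x i)

/-- Hyperplane node `i` has degree `(1,2)`. -/
def deg12 (Wp Wn : Fin m → Fin (n + 1) → TT) (x : Fin (n + 1) → ℝ) (i : Fin m) : Prop :=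
  (∃! j, j ∈ degIn Wp Wn x i) ∧ (degOut Wp Wn x i).ncard = 2

/-- The support of the tangent graph at `x`: all coordinate nodes together
with the hyperplane nodes. -/
def suppV (Wp Wn : Fin m → Fin (n + 1) → TT) (x : Fin (n + 1) → ℝ) : Set (TGV m n) :=
  {v | match v with
       | Sum.inl i => isHypNode Wp Wn x i
       | Sum.inr _ => True}

/-- The underlying undirected edge relation of the tangent graph. -/
def tedgeRel (Wp Wn : Fin m → Fin (n + 1) → TT) (x : Fin (n + 1) → ℝ) :
    TGV m n → TGV m n → Prop := fun u v =>
  match u, v with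
  | Sum.inl i, Sum.inr j => isTEdge Wp Wn x i j
  | _, _ => False

/-- The tangent graph with the hyperplane node `ℓ` (and its incident edges)
deleted. -/
def delNode (Wp Wn : Fin m → Fin (n + 1) → TT) (x : Fin (n + 1) → ℝ) (ℓ : Fin m) :
    SimpleGraph (TGV m n) :=
  SimpleGraph.fromRel fun u v =>
    tedgeRel Wp Wn x u v ∧ u ≠ Sum.inl ℓ ∧ v ≠ Sum.inl ℓ

/-- The tangent graph with the edge between hyperplane node `k` and coordinate
node `j` deleted. -/
def delEdge (Wp Wn : Fin m → Fin (n + 1) → TT) (x : Fin (n + 1) → ℝ) (k : Fin m)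
    (j : Fin (n + 1)) : SimpleGraph (TGV m n) :=
  SimpleGraph.fromRel fun u v =>
    tedgeRel Wp Wn x u v ∧ ¬(u = Sum.inl k ∧ v = Sum.inr j)

/-- Coordinate nodes weakly connected to hyperplane node `k` after deleting the
edge between `k` and `j`. -/
def reachJ (Wp Wn : Fin m → Fin (n + 1) → TT) (x : Fin (n + 1) → ℝ) (k : Fin m)
    (j : Fin (n + 1)) : Finset (Fin (n + 1)) :=
  Finset.univ.filter fun l => (delEdge Wp Wn x k j).Reachable (Sum.inl k) (Sum.inr l)

end Pivot

/-- `j` attains the maximum of the row `w` at `x`. -/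
def Tight {N : ℕ} (w : Fin N → TT) (x : Fin N → ℝ) (j : Fin N) : Prop :=
  ∃ r : ℝ, w j = (r : TT) ∧ ∀ l (s : ℝ), w l = (s : TT) → s + x l ≤ r + x j

theorem matching_false {m N : ℕ} {w : Fin m → Fin N → TT} (hg : TropGeneric w)
    (x : Fin N → ℝ) {q : ℕ} (r : Fin q → Fin m) (c : Fin q → Fin N)
    (hr : Function.Injective r) (hc : Function.Injective c) (σ π : Equiv.Perm (Fin q))
    (hne : σ ≠ π) (hσ : ∀ i, Tight (w (r i)) x (c (σ i)))
    (hπ : ∀ i, Tight (w (r i)) x (c (π i))) : False := by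
  choose v hv hvm using hσ
  choose u hu hum using hπ
  have key : ∀ τ : Equiv.Perm (Fin q),
      ∑ i, (v i + x (c (σ i)) - x (c (τ i))) = ∑ i, v i := by
    intro τ
    have h1 : ∑ i, x (c (σ i)) = ∑ i, x (c i) := Equiv.sum_comp σ (fun i => x (c i))
    have h2 : ∑ i, x (c (τ i)) = ∑ i, x (c i) := Equiv.sum_comp τ (fun i => x (c i))
    rw [Finset.sum_sub_distrib, Finset.sum_add_distrib, h1, h2]; ring
  have hsum : ∀ f : Fin q → ℝ, ∑ i, ((f i : ℝ) : TT) = ((∑ i, f i : ℝ) : TT) := by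
    intro f
    exact (map_sum (WithBot.addHom : ℝ →+ WithBot ℝ) f Finset.univ).symm
  have hσs : ∑ i, w (r i) (c (σ i)) = ((∑ i, v i : ℝ) : TT) := by
    rw [← hsum]; exact Finset.sum_congr rfl fun i _ => hv i
  have hπs : ∑ i, w (r i) (c (π i)) = ((∑ i, v i : ℝ) : TT) := by
    rw [← key π, ← hsum]
    refine Finset.sum_congr rfl fun i _ => ?_
    rw [hu i]
    have h1 := hvm i _ _ (hu i)
    have h2 := hum i _ _ (hv i)
    congr 1; linarith
  have hper : tper (fun i j => w (r i) (c j)) = ((∑ i, v i : ℝ) : TT) := by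
    apply le_antisymm
    · refine Finset.sup_le fun τ _ => ?_
      rw [← key τ, ← hsum]
      refine Finset.sum_le_sum fun i _ => ?_
      show w (r i) (c (τ i)) ≤ _
      by_cases hb : w (r i) (c (τ i)) = ⊥
      · rw [hb]; exact bot_le
      · obtain ⟨s, h⟩ := WithBot.ne_bot_iff_exists.mp hb
        have := hvm i _ _ h.symm
        rw [← h, WithBot.coe_le_coe]; linarith
    · rw [← hσs]
      exact Finset.le_sup (f := fun σ : Equiv.Perm (Fin q) => ∑ i, w (r i) (c (σ i)))
        (Finset.mem_univ σ)
  rcases hg q r c hr hc with h | h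
  · rw [hper] at h; exact WithBot.coe_ne_bot h
  · exact h (Or.inr ⟨σ, π, hne, hσs.trans hper.symm, hπs.trans hper.symm⟩)

/-- two coordinates share a row of `H`. -/
def stepR {m N : ℕ} (H : Finset (Fin m)) (T : Fin m → Finset (Fin N)) (a b : Fin N) : Prop :=
  ∃ i ∈ H, a ∈ T i ∧ b ∈ T i

/-- chains of length `q`. -/
def chainQ {m N : ℕ} (H : Finset (Fin m)) (T : Fin m → Finset (Fin N)) (a b : Fin N)
    (q : ℕ) : Prop :=
  ∃ (c : ℕ → Fin N) (r : ℕ → Fin m), c 0 = a ∧ c q = b ∧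
    ∀ s < q, r s ∈ H ∧ c s ∈ T (r s) ∧ c (s + 1) ∈ T (r s)

theorem exists_chain {m N : ℕ} {H : Finset (Fin m)} {T : Fin m → Finset (Fin N)} {a b : Fin N}
    (i0 : Fin m) (h : Relation.ReflTransGen (stepR H T) a b) : ∃ q, chainQ H T a b q := by
  induction h with
  | refl => exact ⟨0, fun _ => a, fun _ => i0, rfl, rfl, fun s hs => absurd hs (by omega)⟩
  | @tail b d _ hst ih =>
    obtain ⟨q, c, r, h0, hq, hs⟩ := ih
    obtain ⟨i, hi, hb, hd⟩ := hst
    refine ⟨q + 1, fun s => if s ≤ q then c s else d, fun s => if s < q then r s else i,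
      by simp [h0], by simp, fun s hsq => ?_⟩
    by_cases h : s < q
    · have h' : s ≤ q := h.le
      have h'' : s + 1 ≤ q := h
      simp only [h, h', h'', if_true]
      exact hs s h
    · have : s = q := by omega
      subst this
      simp only [lt_irrefl, le_refl, if_true, if_false]
      refine ⟨hi, hq ▸ hb, ?_⟩
      simpa using hd

theorem acyc {m N : ℕ} {w : Fin m → Fin N → TT} (hg : TropGeneric w)
    (x : Fin N → ℝ) {H : Finset (Fin m)} {T : Fin m → Finset (Fin N)}
    (hT : ∀ i ∈ H, ∀ j ∈ T i, Tight (w i) x j) (i : Fin m) (hi : i ∉ H)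
    (a b : Fin N) (ha : Tight (w i) x a) (hb : Tight (w i) x b)
    (h : Relation.ReflTransGen (stepR H T) a b) : a = b := by
  by_contra hab
  have hex := exists_chain i h
  obtain ⟨c, r, h0, hq, hs⟩ := Nat.find_spec hex
  have hmin : ∀ q', q' < Nat.find hex → ¬ chainQ H T a b q' := fun q' h => Nat.find_min hex h
  generalize Nat.find hex = q at *
  have hrinj : ∀ s t, s < t → t < q → r s ≠ r t := by
    intro s t hst htq heq
    refine hmin (q - (t - s)) (by omega)
      ⟨fun u => if u ≤ s then c u else c (u + (t - s)),
       fun u => if u ≤ s then r u else r (u + (t - s)), by simp [h0], ?_, fun u hu => ?_⟩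
    · have h1 : ¬ (q - (t - s) ≤ s) := by omega
      have h2 : q - (t - s) + (t - s) = q := by omega
      simp only [h1, if_false, h2, hq]
    · rcases lt_trichotomy u s with h | h | h
      · have h' : u ≤ s := h.le
        have h'' : u + 1 ≤ s := h
        simp only [h', h'', if_true]
        exact hs u (by omega)
      · subst h
        have h1 : ¬ (u + 1 ≤ u) := by omega
        have h2 : u + 1 + (t - u) = t + 1 := by omega
        simp only [le_refl, if_true, h1, if_false, h2]
        refine ⟨(hs u (by omega)).1, (hs u (by omega)).2.1, ?_⟩
        rw [heq]; exact (hs t (by omega)).2.2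
      · have h1 : ¬ (u ≤ s) := by omega
        have h2 : ¬ (u + 1 ≤ s) := by omega
        have h3 : u + 1 + (t - s) = u + (t - s) + 1 := by omega
        simp only [h1, h2, if_false, h3]
        exact hs _ (by omega)
  have hcinj : ∀ s t, s < t → t ≤ q → c s ≠ c t := by
    intro s t hst htq heq
    refine hmin (q - (t - s)) (by omega)
      ⟨fun u => if u ≤ s then c u else c (u + (t - s)),
       fun u => if u < s then r u else r (u + (t - s)), by simp [h0], ?_, fun u hu => ?_⟩
    · by_cases h1 : q - (t - s) ≤ s
      · have : t = q := by omega
        have h3 : q - (t - s) = s := by omega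
        simp only [h3, le_refl, if_true]
        rw [heq, this, hq]
      · have h2 : q - (t - s) + (t - s) = q := by omega
        simp only [h1, if_false, h2, hq]
    · rcases lt_trichotomy u s with h | h | h
      · have h' : u ≤ s := h.le
        have h'' : u + 1 ≤ s := h
        simp only [h, h', h'', if_true]
        exact hs u (by omega)
      · subst h
        have h1 : ¬ (u + 1 ≤ u) := by omega
        have h2 : u + 1 + (t - u) = t + 1 := by omega
        have h3 : u + (t - u) = t := by omega
        simp only [le_refl, lt_irrefl, if_true, h1, if_false, h2, h3]
        rw [heq]; exact hs t (by omega)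
      · have h1 : ¬ (u ≤ s) := by omega
        have h1' : ¬ (u < s) := by omega
        have h2 : ¬ (u + 1 ≤ s) := by omega
        have h3 : u + 1 + (t - s) = u + (t - s) + 1 := by omega
        simp only [h1, h1', h2, if_false, h3]
        exact hs _ (by omega)
  have hq1 : 1 ≤ q := by
    rcases Nat.eq_zero_or_pos q with h | h
    · subst h; exact absurd (h0.symm.trans hq) hab
    · exact h
  refine matching_false hg x (q := q + 1) (fun s => if (s : ℕ) < q then r s else i)
    (fun s => c s) ?_ ?_ 1 (finRotate (q + 1)) ?_ ?_ ?_
  · intro s t hst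
    have h1 := s.2
    have h2 := t.2
    by_cases hs' : (s : ℕ) < q <;> by_cases ht' : (t : ℕ) < q <;>
      simp only [hs', ht', if_true, if_false] at hst
    · rcases lt_trichotomy (s : ℕ) t with h | h | h
      · exact absurd hst (hrinj _ _ h ht')
      · exact Fin.ext h
      · exact absurd hst.symm (hrinj _ _ h hs')
    · exact absurd (hst ▸ (hs _ hs').1) hi
    · exact absurd (hst ▸ (hs _ ht').1) hi
    · exact Fin.ext (by omega)
  · intro s t hst
    rcases lt_trichotomy (s : ℕ) t with h | h | h
    · exact absurd hst (hcinj _ _ h (by omega))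
    · exact Fin.ext h
    · exact absurd hst.symm (hcinj _ _ h (by omega))
  · intro h
    have := congrArg (fun p : Equiv.Perm (Fin (q+1)) => ((p (Fin.last q) : Fin (q+1)) : ℕ)) h
    simp at this
    omega
  · intro s
    by_cases h : (s : ℕ) < q
    · simp only [h, if_true, Equiv.Perm.one_apply]
      exact hT _ (hs s h).1 _ (hs s h).2.1
    · have : (s : ℕ) = q := by omega
      simp only [h, if_false, Equiv.Perm.one_apply]
      rw [this, hq]; exact hb
  · intro s
    by_cases h : (s : ℕ) < q
    · have h2 : ((finRotate (q+1) s : Fin (q+1)) : ℕ) = s + 1 := by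
        rw [finRotate_of_lt h]
      simp only [h, if_true, h2]
      exact hT _ (hs s h).1 _ (hs s h).2.2
    · have h3 : s = Fin.last q := Fin.ext (by simp; omega)
      subst h3
      simp only [h, if_false, finRotate_last, Fin.val_zero, h0]; exact ha

theorem forest_count {m N : ℕ} {w : Fin m → Fin N → TT} (hg : TropGeneric w)
    (x : Fin N → ℝ) (T : Fin m → Finset (Fin N)) (H : Finset (Fin m)) :
    (∀ i ∈ H, (T i).Nonempty ∧ ∀ j ∈ T i, Tight (w i) x j) →
    ∀ (β : Type) (φ : Fin N → β), (∀ i ∈ H, ∀ a ∈ T i, ∀ b ∈ T i, φ a = φ b) →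
    ∑ i ∈ H, (T i).card + (Finset.univ.image φ).card ≤ N + H.card := by
  induction H using Finset.induction_on with
  | empty =>
    intro _ β φ _
    simpa using (Finset.card_image_le (s := Finset.univ) (f := φ))
  | @insert i H hi ih =>
    intro hT β φ hφ
    have hT' : ∀ i ∈ H, (T i).Nonempty ∧ ∀ j ∈ T i, Tight (w i) x j :=
      fun i' h => hT i' (Finset.mem_insert_of_mem h)
    obtain ⟨⟨t0, ht0⟩, hTi⟩ := hT i (Finset.mem_insert_self _ _)
    let P : Fin N → Fin N → Prop := fun v t => t ∈ T i ∧ Relation.ReflTransGen (stepR H T) t v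
    let φ' : Fin N → Fin N ⊕ β := fun v =>
      if h : ∃ t, P v t then Sum.inl h.choose else Sum.inr (φ v)
    have hφreach : ∀ t v, Relation.ReflTransGen (stepR H T) t v → φ t = φ v := by
      intro t v h
      induction h with
      | refl => rfl
      | tail _ hs ih =>
        obtain ⟨i', hi', h1, h2⟩ := hs
        exact ih.trans (hφ i' (Finset.mem_insert_of_mem hi') _ h1 _ h2)
    have hφ' : ∀ i ∈ H, ∀ a ∈ T i, ∀ b ∈ T i, φ' a = φ' b := by
      intro i' hi' a ha b hb
      have hP : P a = P b := by
        funext t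
        apply propext
        constructor
        · rintro ⟨h1, h2⟩; exact ⟨h1, h2.tail ⟨i', hi', ha, hb⟩⟩
        · rintro ⟨h1, h2⟩; exact ⟨h1, h2.tail ⟨i', hi', hb, ha⟩⟩
      have hf := hφ i' (Finset.mem_insert_of_mem hi') a ha b hb
      simp only [φ', hP, hf]
    have this : ∑ i ∈ H, (T i).card + (Finset.univ.image φ').card ≤ N + H.card := by
      convert ih hT' _ φ' hφ'
    have hsub : (T i).disjSum ((Finset.univ.image φ).erase (φ t0)) ⊆ Finset.univ.image φ' := by
      intro z hz
      rw [Finset.mem_disjSum] at hz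
      rw [Finset.mem_image]
      rcases hz with ⟨t, ht, rfl⟩ | ⟨b, hb, rfl⟩
      · refine ⟨t, Finset.mem_univ _, ?_⟩
        have hex : ∃ t', P t t' := ⟨t, ht, Relation.ReflTransGen.refl⟩
        have hcs := hex.choose_spec
        simp only [φ', dif_pos hex]
        congr 1
        exact acyc hg x (fun i h => (hT' i h).2) i hi _ _ (hTi _ hcs.1) (hTi _ ht) hcs.2
      · rw [Finset.mem_erase, Finset.mem_image] at hb
        obtain ⟨hb, v, _, rfl⟩ := hb
        refine ⟨v, Finset.mem_univ _, ?_⟩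
        have hex : ¬ ∃ t', P v t' := by
          rintro ⟨t, ht, htv⟩
          exact hb ((hφreach _ _ htv).symm.trans
            (hφ i (Finset.mem_insert_self _ _) _ ht _ ht0))
        simp only [φ', dif_neg hex]
    have hc := Finset.card_le_card hsub
    rw [Finset.card_disjSum, Finset.card_erase_of_mem
      (Finset.mem_image_of_mem _ (Finset.mem_univ _))] at hc
    have hpos : 0 < (Finset.univ.image φ).card :=
      Finset.card_pos.mpr ⟨_, Finset.mem_image_of_mem φ (Finset.mem_univ t0)⟩
    rw [Finset.sum_insert hi, Finset.card_insert_of_notMem hi]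
    omega

theorem forest_count' {m N : ℕ} {w : Fin m → Fin N → TT} (hg : TropGeneric w)
    (x : Fin N → ℝ) (T : Fin m → Finset (Fin N)) (H : Finset (Fin m))
    (hT : ∀ i ∈ H, (T i).Nonempty ∧ ∀ j ∈ T i, Tight (w i) x j)
    (β : Type) (φ : Fin N → β) (hφ : ∀ i ∈ H, ∀ a ∈ T i, ∀ b ∈ T i, φ a = φ b)
    (S : Finset β) (hS : ∀ b ∈ S, ∃ v, φ v = b) :
    ∑ i ∈ H, (T i).card + S.card ≤ N + H.card := by
  have h1 := forest_count hg x T H hT β φ hφ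
  have h2 : S.card ≤ (Finset.univ.image φ).card := by
    apply Finset.card_le_card
    intro b hb
    obtain ⟨v, hv⟩ := hS b hb
    exact Finset.mem_image.2 ⟨v, Finset.mem_univ _, hv⟩
  exact le_trans (Nat.add_le_add_left h2 _) h1

theorem le_tdot' {n : ℕ} {a : Fin (n + 1) → TT} {x : Fin (n + 1) → ℝ} {j : Fin (n + 1)} {r : ℝ}
    (h : a j = (r : TT)) : ((r + x j : ℝ) : TT) ≤ tdot a (toT x) := by
  have := Finset.le_sup (f := fun j => a j + toT x j) (Finset.mem_univ j)
  simp only [h, toT] at this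
  exact_mod_cast this

theorem tdot_exists {n : ℕ} {a : Fin (n + 1) → TT} (x : Fin (n + 1) → ℝ)
    (h : ⊥ < tdot a (toT x)) :
    ∃ j, ∃ r : ℝ, a j = (r : TT) ∧ tdot a (toT x) = ((r + x j : ℝ) : TT) := by
  obtain ⟨j, _, hj⟩ := Finset.exists_mem_eq_sup Finset.univ ⟨0, Finset.mem_univ _⟩
    (fun j => a j + toT x j)
  have hj' : tdot a (toT x) = a j + (x j : TT) := hj
  have hne : a j ≠ ⊥ := by
    intro hb
    rw [hj', hb, WithBot.bot_add] at h
    exact lt_irrefl _ h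
  obtain ⟨r, hr⟩ := WithBot.ne_bot_iff_exists.mp hne
  refine ⟨j, r, hr.symm, ?_⟩
  rw [hj', ← hr]; rfl

theorem tdot_pos {n : ℕ} {a : Fin (n + 1) → TT} (x : Fin (n + 1) → ℝ)
    (h : ∃ j, a j ≠ ⊥) : ⊥ < tdot a (toT x) := by
  obtain ⟨j, hj⟩ := h
  obtain ⟨r, hr⟩ := WithBot.ne_bot_iff_exists.mp hj
  exact lt_of_lt_of_le (WithBot.bot_lt_coe _) (le_tdot' (x := x) hr.symm)

theorem tight_exists {n : ℕ} {w : Fin (n + 1) → TT} (x : Fin (n + 1) → ℝ)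
    (h : ∃ j, w j ≠ ⊥) : ∃ j, Tight w x j := by
  obtain ⟨j, r, hr, he⟩ := tdot_exists x (tdot_pos x h)
  refine ⟨j, r, hr, fun l s hs => ?_⟩
  have := le_tdot' (x := x) hs
  rw [he] at this
  exact_mod_cast this

theorem tight_iff {n : ℕ} {w : Fin (n + 1) → TT} (x : Fin (n + 1) → ℝ)
    (h : ∃ j, w j ≠ ⊥) (j : Fin (n + 1)) :
    w j + (x j : TT) = tdot w (toT x) ↔ Tight w x j := by
  obtain ⟨j0, r0, hr0, he⟩ := tdot_exists x (tdot_pos x h)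
  rw [he]
  constructor
  · intro hj
    have hne : w j ≠ ⊥ := by
      intro hb
      rw [hb, WithBot.bot_add] at hj
      exact WithBot.coe_ne_bot hj.symm
    obtain ⟨r, hr⟩ := WithBot.ne_bot_iff_exists.mp hne
    refine ⟨r, hr.symm, fun l s hs => ?_⟩
    have := le_tdot' (x := x) hs
    rw [he, ← hj, ← hr] at this
    exact_mod_cast this
  · rintro ⟨r, hr, hm⟩
    have h1 := hm _ _ hr0
    have h2 := le_tdot' (x := x) hr
    rw [he] at h2
    have h2' : r + x j ≤ r0 + x j0 := by exact_mod_cast h2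
    rw [hr]
    have : r + x j = r0 + x j0 := le_antisymm h2' h1
    exact_mod_cast this

theorem move {n : ℕ} {a b w : Fin (n + 1) → TT} {x y : Fin (n + 1) → ℝ} {j : Fin (n + 1)}
    (ha : ∀ j, a j ≠ ⊥ → w j = a j) (hb : ∀ j, b j ≠ ⊥ → w j = b j)
    (ht : Tight w x j) (haj : a j ≠ ⊥) (hy : tdot a (toT y) ≤ tdot b (toT y))
    (hd : ∀ l, y l - x l ≤ y j - x j) :
    ∃ j', b j' ≠ ⊥ ∧ Tight w x j' ∧ y j' - x j' = y j - x j := by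
  obtain ⟨r, hr, hm⟩ := ht
  have har : a j = (r : TT) := (ha j haj).symm.trans hr
  have h1 := le_tdot' (x := y) har
  obtain ⟨j', s, hs, he⟩ := tdot_exists y (lt_of_lt_of_le (tdot_pos y ⟨j, haj⟩) hy)
  have h2 : r + y j ≤ s + y j' := by
    have := h1.trans hy
    rw [he] at this
    exact_mod_cast this
  have hbj : b j' ≠ ⊥ := by rw [hs]; exact WithBot.coe_ne_bot
  have hws : w j' = (s : TT) := (hb j' hbj).trans hs
  have h3 := hm _ _ hws
  have h4 := hd j'
  refine ⟨j', hbj, ⟨s, hws, fun l t hl => ?_⟩, by linarith⟩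
  have := hm _ _ hl
  linarith

theorem eJ_mem {n : ℕ} {x : Fin (n + 1) → ℝ} {J : Finset (Fin (n + 1))} {d : ℝ} {l : Fin (n + 1)}
    (h : l ∈ J) : (x + d • eJ J) l = x l + d := by
  simp [eJ, h]

theorem eJ_not {n : ℕ} {x : Fin (n + 1) → ℝ} {J : Finset (Fin (n + 1))} {d : ℝ} {l : Fin (n + 1)}
    (h : l ∉ J) : (x + d • eJ J) l = x l := by
  simp [eJ, h]

theorem row_up {n : ℕ} {w : Fin (n + 1) → TT} (hw : ∃ j, w j ≠ ⊥) (x : Fin (n + 1) → ℝ)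
    (J : Finset (Fin (n + 1))) (ε : ℝ) (hε : 0 < ε)
    (hcl : ∀ δ, 0 ≤ δ → δ < ε → (∀ j, Tight w (x + δ • eJ J) j → j ∈ J) ∨
      (∀ j, Tight w (x + δ • eJ J) j → j ∉ J)) :
    (∀ j, Tight w x j → Tight w (x + ε • eJ J) j) ∧
    (∀ j, Tight w (x + ε • eJ J) j → ¬ Tight w x j →
      j ∈ J ∧ ∀ l, Tight w x l → l ∉ J) := by
  have h0 := hcl 0 le_rfl hε
  simp only [zero_smul, add_zero] at h0
  have hyle : ∀ l, (x + ε • eJ J) l ≤ x l + ε := by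
    intro l
    by_cases h : l ∈ J
    · rw [eJ_mem h]
    · rw [eJ_not h]; linarith
  obtain ⟨t, htt⟩ := tight_exists x hw
  rcases h0 with h0 | h0
  · have htJ := h0 t htt
    obtain ⟨rt, hrt, hmt⟩ := htt
    constructor
    · intro j hj
      have hjJ := h0 j hj
      obtain ⟨r, hr, hm⟩ := hj
      refine ⟨r, hr, fun l s hs => ?_⟩
      have := hm l s hs
      have := hyle l
      rw [eJ_mem hjJ]; linarith
    · intro j hj hnj
      exfalso
      apply hnj
      obtain ⟨r, hr, hm⟩ := hj
      have h1 := hm _ _ hrt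
      rw [eJ_mem htJ] at h1
      have h2 := hyle j
      refine ⟨r, hr, fun l s hs => ?_⟩
      have := hmt l s hs
      linarith
  · have htJ := h0 t htt
    obtain ⟨rt, hrt, hmt⟩ := htt
    obtain ⟨u, ru, hru, hmu⟩ := tight_exists (x + ε • eJ J) hw
    have hclaim : ru + (x + ε • eJ J) u ≤ rt + x t := by
      by_contra hlt
      push Not at hlt
      have huJ : u ∈ J := by
        by_contra h
        rw [eJ_not h] at hlt
        have := hmt _ _ hru
        linarith
      rw [eJ_mem huJ] at hlt
      have hu1 : ru + x u < rt + x t := by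
        refine lt_of_le_of_ne (hmt _ _ hru) fun he => ?_
        exact h0 u ⟨ru, hru, fun l s hs => he ▸ hmt l s hs⟩ huJ
      have hmax : ∀ l (s : ℝ), w l = (s : TT) →
          s + (x + (rt + x t - ru - x u) • eJ J) l ≤ rt + x t := by
        intro l s hs
        by_cases hl : l ∈ J
        · have := hmu l s hs
          rw [eJ_mem hl, eJ_mem huJ] at this
          rw [eJ_mem hl]; linarith
        · rw [eJ_not hl]; exact hmt l s hs
      have tu : Tight w (x + (rt + x t - ru - x u) • eJ J) u :=
        ⟨ru, hru, fun l s hs => by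
          have := hmax l s hs
          rw [eJ_mem huJ]; linarith⟩
      have tt : Tight w (x + (rt + x t - ru - x u) • eJ J) t :=
        ⟨rt, hrt, fun l s hs => by
          have := hmax l s hs
          rw [eJ_not htJ]; linarith⟩
      rcases hcl (rt + x t - ru - x u) (by linarith) (by linarith) with h | h
      · exact htJ (h t tt)
      · exact h u tu huJ
    constructor
    · intro j hj
      have hjJ := h0 j hj
      obtain ⟨r, hr, hm⟩ := hj
      refine ⟨r, hr, fun l s hs => ?_⟩
      have h1 := hmu l s hs
      have h2 := hm _ _ hrt
      rw [eJ_not hjJ]; linarith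
    · intro j hj hnj
      refine ⟨?_, h0⟩
      by_contra hjJ
      apply hnj
      obtain ⟨r, hr, hm⟩ := hj
      have h1 := hm _ _ hrt
      rw [eJ_not hjJ, eJ_not htJ] at h1
      exact ⟨r, hr, fun l s hs => (hmt l s hs).trans h1⟩

theorem tight_shift {n : ℕ} {w : Fin (n + 1) → TT} {x y : Fin (n + 1) → ℝ} (c : ℝ)
    (h : ∀ l, y l = x l + c) (j : Fin (n + 1)) : Tight w y j ↔ Tight w x j := by
  unfold Tight
  simp only [h]
  constructor
  · rintro ⟨r, hr, hm⟩
    exact ⟨r, hr, fun l s hs => by have := hm l s hs; linarith⟩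
  · rintro ⟨r, hr, hm⟩
    exact ⟨r, hr, fun l s hs => by have := hm l s hs; linarith⟩

theorem row_down {n : ℕ} {w : Fin (n + 1) → TT} (hw : ∃ j, w j ≠ ⊥) (x : Fin (n + 1) → ℝ)
    (J : Finset (Fin (n + 1))) (ε : ℝ) (hε : 0 < ε)
    (hcl : ∀ δ, 0 < δ → δ ≤ ε → (∀ j, Tight w (x + δ • eJ J) j → j ∈ J) ∨
      (∀ j, Tight w (x + δ • eJ J) j → j ∉ J)) :
    (∀ j, Tight w (x + ε • eJ J) j → Tight w x j) ∧
    (∀ j, Tight w x j → ¬ Tight w (x + ε • eJ J) j →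
      j ∉ J ∧ ∀ l, Tight w (x + ε • eJ J) l → l ∈ J) := by
  have key : ∀ δ, ∀ l, ((x + ε • eJ J) + δ • eJ Jᶜ) l = (x + (ε - δ) • eJ J) l + δ := by
    intro δ l
    by_cases h : l ∈ J
    · have : l ∉ Jᶜ := by simpa using h
      rw [eJ_not this, eJ_mem h, eJ_mem h]; ring
    · have : l ∈ Jᶜ := by simpa using h
      rw [eJ_mem this, eJ_not h, eJ_not h]
  have := row_up hw (x + ε • eJ J) Jᶜ ε hε (by
    intro δ h1 h2
    simp only [fun j => tight_shift (w := w) δ (key δ) j, Finset.mem_compl, not_not]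
    exact (hcl (ε - δ) (by linarith) (by linarith)).symm)
  have key2 : ∀ j, Tight w ((x + ε • eJ J) + ε • eJ Jᶜ) j ↔ Tight w x j := by
    intro j
    rw [tight_shift ε (key ε)]
    simp
  simpa only [key2, Finset.mem_compl, not_not] using this

theorem lam_lt (t : ℝ) (A B : TT) : tE (t : TT) - tE A < tE (t : TT) - tE B ↔ B < A := by
  induction A using WithBot.recBotCoe with
  | bot => 
    have : tE (t : TT) - tE ⊥ = ⊤ := by
      show (t : EReal) - ⊥ = ⊤
      simp
    rw [this]; simp
  | coe a =>
    induction B using WithBot.recBotCoe with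
    | bot =>
      have : tE (t : TT) - tE ⊥ = ⊤ := by
        show (t : EReal) - ⊥ = ⊤
        simp
      rw [this]
      simp only [WithBot.bot_lt_coe, iff_true]
      show (t : EReal) - (a : EReal) < ⊤
      exact_mod_cast EReal.coe_lt_top (t - a)
    | coe b =>
      show (t : EReal) - (a : EReal) < (t : EReal) - (b : EReal) ↔ _
      rw [WithBot.coe_lt_coe]
      norm_cast
      constructor <;> intro h <;> linarith

section Ctx

variable {m n : ℕ} {Wp Wn : Fin m → Fin (n + 1) → TT}

theorem tmod_p (hsign : ∀ i j, min (Wp i j) (Wn i j) = ⊥) (i : Fin m) (j : Fin (n + 1))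
    (h : Wp i j ≠ ⊥) : tmod Wp Wn i j = Wp i j := by
  have : Wn i j = ⊥ := (min_eq_bot.mp (hsign i j)).resolve_left h
  simp [tmod, this]

theorem tmod_n (hsign : ∀ i j, min (Wp i j) (Wn i j) = ⊥) (i : Fin m) (j : Fin (n + 1))
    (h : Wn i j ≠ ⊥) : tmod Wp Wn i j = Wn i j := by
  have : Wp i j = ⊥ := (min_eq_bot.mp (hsign i j)).resolve_right h
  simp [tmod, this]

theorem tight_or {i : Fin m} {x : Fin (n + 1) → ℝ} {j : Fin (n + 1)}
    (h : Tight (tmod Wp Wn i) x j) : Wp i j ≠ ⊥ ∨ Wn i j ≠ ⊥ := by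
  by_contra hc
  push Not at hc
  obtain ⟨r, hr, _⟩ := h
  simp [tmod, hc.1, hc.2] at hr

theorem not_both (hsign : ∀ i j, min (Wp i j) (Wn i j) = ⊥) {i : Fin m} {j : Fin (n + 1)}
    (h1 : Wp i j ≠ ⊥) (h2 : Wn i j ≠ ⊥) : False := by
  rcases min_eq_bot.mp (hsign i j) with h | h
  · exact h1 h
  · exact h2 h

/-- tight coordinates as a finset -/
def Ts (Wp Wn : Fin m → Fin (n + 1) → TT) (x : Fin (n + 1) → ℝ) (i : Fin m) :
    Finset (Fin (n + 1)) :=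
  Finset.univ.filter fun j => Tight (tmod Wp Wn i) x j

theorem mem_Ts {x : Fin (n + 1) → ℝ} {i : Fin m} {j : Fin (n + 1)} :
    j ∈ Ts Wp Wn x i ↔ Tight (tmod Wp Wn i) x j := by simp [Ts]

theorem edge_iff (hrow : ∀ i, ∃ j, max (Wp i j) (Wn i j) ≠ ⊥) {x : Fin (n + 1) → ℝ} {i : Fin m}
    {j : Fin (n + 1)} :
    isTEdge Wp Wn x i j ↔ isHypNode Wp Wn x i ∧ j ∈ Ts Wp Wn x i := by
  unfold isTEdge
  rw [tight_iff (w := tmod Wp Wn i) x (hrow i), mem_Ts]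

theorem hyp_both (hsign : ∀ i j, min (Wp i j) (Wn i j) = ⊥)
    (hrow : ∀ i, ∃ j, max (Wp i j) (Wn i j) ≠ ⊥)
    {x : Fin (n + 1) → ℝ} {i : Fin m} (h : isHypNode Wp Wn x i) :
    ∃ a ∈ Ts Wp Wn x i, ∃ c ∈ Ts Wp Wn x i, Wp i a ≠ ⊥ ∧ Wn i c ≠ ⊥ := by
  obtain ⟨j, hj⟩ := tight_exists x (w := tmod Wp Wn i) (hrow i)
  rcases tight_or hj with hp | hn
  · obtain ⟨j', h1, h2, _⟩ := move (tmod_p hsign i) (tmod_n hsign i) hj hp (y := x) h.1.le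
      (by simp)
    exact ⟨j, mem_Ts.2 hj, j', mem_Ts.2 h2, hp, h1⟩
  · obtain ⟨j', h1, h2, _⟩ := move (tmod_n hsign i) (tmod_p hsign i) hj hn (y := x) h.1.ge
      (by simp)
    exact ⟨j', mem_Ts.2 h2, j, mem_Ts.2 hj, h1, hn⟩

theorem hyp_card (hsign : ∀ i j, min (Wp i j) (Wn i j) = ⊥)
    (hrow : ∀ i, ∃ j, max (Wp i j) (Wn i j) ≠ ⊥)
    {x : Fin (n + 1) → ℝ} {i : Fin m} (h : isHypNode Wp Wn x i) :
    2 ≤ (Ts Wp Wn x i).card := by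
  obtain ⟨a, ha, c, hc, hp, hn⟩ := hyp_both hsign hrow h
  have hac : a ≠ c := by rintro rfl; exact not_both hsign hp hn
  rw [← Finset.card_pair hac]
  apply Finset.card_le_card
  intro z hz
  simp only [Finset.mem_insert, Finset.mem_singleton] at hz
  rcases hz with rfl | rfl <;> assumption

theorem hyp_of_K (hrow : ∀ i, ∃ j, max (Wp i j) (Wn i j) ≠ ⊥) {K : Finset (Fin m)}
    {x : Fin (n + 1) → ℝ} (hx : toT x ∈ edgeEK Wp Wn K) {i : Fin m} (hi : i ∈ K) :
    isHypNode Wp Wn x i := by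
  have he : tdot (Wp i) (toT x) = tdot (Wn i) (toT x) := hx.1 i hi
  refine ⟨he, ?_⟩
  obtain ⟨j, hj⟩ := hrow i
  by_cases h : Wp i j = ⊥
  · rw [he]
    refine tdot_pos x ⟨j, fun h' => hj ?_⟩
    simp [h, h']
  · exact tdot_pos x ⟨j, h⟩

theorem bpt (hsign : ∀ i j, min (Wp i j) (Wn i j) = ⊥)
    (hrow : ∀ i, ∃ j, max (Wp i j) (Wn i j) ≠ ⊥)
    (hgen : TropGeneric (tmod Wp Wn)) {K : Finset (Fin m)} (hK : K.card + 1 = n)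
    {x : Fin (n + 1) → ℝ} (hx : toT x ∈ edgeEK Wp Wn K) (k : Fin m)
    (hk : isHypNode Wp Wn x k) (hk3 : 3 ≤ (Ts Wp Wn x k).card) :
    k ∈ K ∧ (∀ i, isHypNode Wp Wn x i ↔ i ∈ K) ∧ (Ts Wp Wn x k).card = 3 ∧
      ∀ i ∈ K, i ≠ k → (Ts Wp Wn x i).card = 2 := by
  set H : Finset (Fin m) := Finset.univ.filter fun i => isHypNode Wp Wn x i with hH
  have memH : ∀ i, i ∈ H ↔ isHypNode Wp Wn x i := fun i => by simp [hH]
  have hKH : K ⊆ H := fun i hi => (memH i).2 (hyp_of_K hrow hx hi)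
  have hc2 : ∀ i ∈ H, 2 ≤ (Ts Wp Wn x i).card := fun i hi => hyp_card hsign hrow ((memH i).1 hi)
  have hF := forest_count' hgen x (Ts Wp Wn x) H
    (fun i hi => ⟨Finset.card_pos.1 (by have := hc2 i hi; omega), fun j hj => mem_Ts.1 hj⟩)
    Unit (fun _ => ()) (fun _ _ _ _ _ _ => rfl)
      {()} (fun _ _ => ⟨0, rfl⟩)
  rw [Finset.card_singleton] at hF
  have hsum : ∑ i ∈ H, (Ts Wp Wn x i).card = ∑ i ∈ H, ((Ts Wp Wn x i).card - 2) + 2 * H.card := by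
    rw [mul_comm, ← smul_eq_mul, ← Finset.sum_const, ← Finset.sum_add_distrib]
    refine Finset.sum_congr rfl fun i hi => ?_
    have := hc2 i hi
    omega
  have hkH : k ∈ H := (memH k).2 hk
  have hsplit := Finset.add_sum_erase H (fun i => (Ts Wp Wn x i).card - 2) hkH
  have hcard := Finset.card_le_card hKH
  have hHK : K = H := Finset.eq_of_subset_of_card_le hKH (by omega)
  refine ⟨hHK ▸ hkH, fun i => by rw [hHK]; exact (memH i).symm, by omega, fun i hi hik => ?_⟩
  have hi' : i ∈ H := hKH hi
  have := Finset.single_le_sum (s := H.erase k) (f := fun i => (Ts Wp Wn x i).card - 2)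
    (fun _ _ => Nat.zero_le _) (Finset.mem_erase.2 ⟨hik, hi'⟩)
  have := hc2 i hi'
  omega

theorem openpt (hsign : ∀ i j, min (Wp i j) (Wn i j) = ⊥)
    (hrow : ∀ i, ∃ j, max (Wp i j) (Wn i j) ≠ ⊥)
    (hgen : TropGeneric (tmod Wp Wn)) {K : Finset (Fin m)} (hK : K.card + 1 = n)
    {x : Fin (n + 1) → ℝ} (hx : toT x ∈ edgeEK Wp Wn K) (J : Finset (Fin (n + 1)))
    (hJ0 : J ≠ ∅) (hJ1 : J ≠ Finset.univ) (ε : ℝ) (hε : 0 < ε)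
    (hup : toT (x + ε • eJ J) ∈ edgeEK Wp Wn K)
    (hdn : toT (x + (-ε) • eJ J) ∈ edgeEK Wp Wn K) :
    (∀ i, isHypNode Wp Wn x i ↔ i ∈ K) ∧ (∀ i ∈ K, (Ts Wp Wn x i).card = 2) ∧
    ∀ i ∈ K, (∀ j, Tight (tmod Wp Wn i) x j → j ∈ J) ∨
      (∀ j, Tight (tmod Wp Wn i) x j → j ∉ J) := by
  -- moving lemmas
  have dup : ∀ j ∈ J, ∀ l, (x + ε • eJ J) l - x l ≤ (x + ε • eJ J) j - x j := by
    intro j hj l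
    rw [eJ_mem hj]
    by_cases h : l ∈ J
    · rw [eJ_mem h]; linarith
    · rw [eJ_not h]; linarith
  have ddn : ∀ j, j ∉ J → ∀ l, (x + (-ε) • eJ J) l - x l ≤ (x + (-ε) • eJ J) j - x j := by
    intro j hj l
    rw [eJ_not hj]
    by_cases h : l ∈ J
    · rw [eJ_mem h]; linarith
    · rw [eJ_not h]; linarith
  have cup : ∀ j ∈ J, ∀ l, (x + ε • eJ J) l - x l = (x + ε • eJ J) j - x j → l ∈ J := by
    intro j hj l hl
    by_contra h
    rw [eJ_mem hj, eJ_not h] at hl; linarith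
  have cdn : ∀ j, j ∉ J → ∀ l, (x + (-ε) • eJ J) l - x l = (x + (-ε) • eJ J) j - x j →
      l ∉ J := by
    intro j hj l hl h
    rw [eJ_not hj, eJ_mem h] at hl; linarith
  -- from negative to positive, always
  have NP : ∀ i j, Tight (tmod Wp Wn i) x j → Wn i j ≠ ⊥ →
      ∃ j', Wp i j' ≠ ⊥ ∧ Tight (tmod Wp Wn i) x j' ∧ (j' ∈ J ↔ j ∈ J) := by
    intro i j hj hn
    by_cases hjJ : j ∈ J
    · obtain ⟨j', h1, h2, h3⟩ := move (tmod_n hsign i) (tmod_p hsign i) hj hn (hup.2 i) (dup j hjJ)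
      exact ⟨j', h1, h2, iff_of_true (cup j hjJ j' h3) hjJ⟩
    · obtain ⟨j', h1, h2, h3⟩ := move (tmod_n hsign i) (tmod_p hsign i) hj hn (hdn.2 i) (ddn j hjJ)
      exact ⟨j', h1, h2, iff_of_false (cdn j hjJ j' h3) hjJ⟩
  have PN : ∀ i ∈ K, ∀ j, Tight (tmod Wp Wn i) x j → Wp i j ≠ ⊥ →
      ∃ j', Wn i j' ≠ ⊥ ∧ Tight (tmod Wp Wn i) x j' ∧ (j' ∈ J ↔ j ∈ J) := by
    intro i hi j hj hp
    by_cases hjJ : j ∈ J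
    · obtain ⟨j', h1, h2, h3⟩ := move (tmod_p hsign i) (tmod_n hsign i) hj hp
        (le_of_eq (hup.1 i hi)) (dup j hjJ)
      exact ⟨j', h1, h2, iff_of_true (cup j hjJ j' h3) hjJ⟩
    · obtain ⟨j', h1, h2, h3⟩ := move (tmod_p hsign i) (tmod_n hsign i) hj hp
        (le_of_eq (hdn.1 i hi)) (ddn j hjJ)
      exact ⟨j', h1, h2, iff_of_false (cdn j hjJ j' h3) hjJ⟩
  have PAIR : ∀ i ∈ K, ∀ j, Tight (tmod Wp Wn i) x j → ∃ a c, Wp i a ≠ ⊥ ∧ Wn i c ≠ ⊥ ∧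
      Tight (tmod Wp Wn i) x a ∧ Tight (tmod Wp Wn i) x c ∧ (a ∈ J ↔ j ∈ J) ∧ (c ∈ J ↔ j ∈ J) := by
    intro i hi j hj
    rcases tight_or hj with h | h
    · obtain ⟨c, h1, h2, h3⟩ := PN i hi j hj h
      exact ⟨j, c, h, h1, hj, h2, Iff.rfl, h3⟩
    · obtain ⟨a, h1, h2, h3⟩ := NP i j hj h
      exact ⟨a, j, h1, h, h2, hj, h3, Iff.rfl⟩
  have hc2 : ∀ i ∈ K, 2 ≤ (Ts Wp Wn x i).card :=
    fun i hi => hyp_card hsign hrow (hyp_of_K hrow hx hi)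
  have hsum : ∑ i ∈ K, (Ts Wp Wn x i).card = ∑ i ∈ K, ((Ts Wp Wn x i).card - 2) + 2 * K.card := by
    rw [mul_comm, ← smul_eq_mul, ← Finset.sum_const, ← Finset.sum_add_distrib]
    refine Finset.sum_congr rfl fun i hi => ?_
    have := hc2 i hi
    omega
  have hne : ∀ i ∈ K, (Ts Wp Wn x i).Nonempty ∧ ∀ j ∈ Ts Wp Wn x i, Tight (tmod Wp Wn i) x j :=
    fun i hi => ⟨Finset.card_pos.1 (by have := hc2 i hi; omega), fun j hj => mem_Ts.1 hj⟩
  have hsingle : ∀ i ∈ K, (Ts Wp Wn x i).card - 2 ≤ ∑ i ∈ K, ((Ts Wp Wn x i).card - 2) :=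
    fun i hi => Finset.single_le_sum (f := fun i => (Ts Wp Wn x i).card - 2)
      (fun _ _ => Nat.zero_le _) hi
  have hcl : ∀ i ∈ K, (∀ j, Tight (tmod Wp Wn i) x j → j ∈ J) ∨
      (∀ j, Tight (tmod Wp Wn i) x j → j ∉ J) := by
    intro i hi
    by_contra hcon
    push Not at hcon
    obtain ⟨⟨u, hu, huJ⟩, ⟨v, hv, hvJ⟩⟩ := hcon
    obtain ⟨a, c, ha, hc, hta, htc, haJ, hcJ⟩ := PAIR i hi u hu
    obtain ⟨a', c', ha', hc', hta', htc', haJ', hcJ'⟩ := PAIR i hi v hv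
    have h4 : ({a, c, a', c'} : Finset (Fin (n + 1))).card = 4 := by
      have e1 : a ≠ c := by rintro rfl; exact not_both hsign ha hc
      have e2 : a' ≠ c' := by rintro rfl; exact not_both hsign ha' hc'
      have e3 : a ≠ a' := by rintro rfl; tauto
      have e4 : a ≠ c' := by rintro rfl; tauto
      have e5 : c ≠ a' := by rintro rfl; tauto
      have e6 : c ≠ c' := by rintro rfl; tauto
      rw [Finset.card_insert_of_notMem (by simp [*]), Finset.card_insert_of_notMem (by simp [*]),
        Finset.card_pair e2]
    have h5 : 4 ≤ (Ts Wp Wn x i).card := by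
      rw [← h4]
      apply Finset.card_le_card
      intro z hz
      simp only [Finset.mem_insert, Finset.mem_singleton] at hz
      rw [mem_Ts]
      rcases hz with rfl | rfl | rfl | rfl <;> assumption
    have hF := forest_count' hgen x (Ts Wp Wn x) K hne Unit (fun _ => ()) (fun _ _ _ _ _ _ => rfl)
      {()} (fun _ _ => ⟨0, rfl⟩)
    rw [Finset.card_singleton] at hF
    have := hsingle i hi
    omega
  have himg : ∀ b ∈ ({True, False} : Finset Prop), ∃ v, (v ∈ J) = b := by
    obtain ⟨a, ha⟩ := Finset.nonempty_iff_ne_empty.2 hJ0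
    have : ∃ b, b ∉ J := by
      by_contra h
      push Not at h
      exact hJ1 (Finset.eq_univ_iff_forall.2 h)
    obtain ⟨b, hb⟩ := this
    intro p hp
    simp only [Finset.mem_insert, Finset.mem_singleton] at hp
    rcases hp with rfl | rfl
    · exact ⟨a, eq_true ha⟩
    · exact ⟨b, eq_false hb⟩
  have hc22 : ({True, False} : Finset Prop).card = 2 := Finset.card_pair (by simp)
  have hφK : ∀ i ∈ K, ∀ a ∈ Ts Wp Wn x i, ∀ b ∈ Ts Wp Wn x i, (a ∈ J) = (b ∈ J) := by
    intro i hi a ha b hb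
    rw [mem_Ts] at ha hb
    rcases hcl i hi with h | h
    · exact propext (iff_of_true (h a ha) (h b hb))
    · exact propext (iff_of_false (h a ha) (h b hb))
  have hF := forest_count' hgen x (Ts Wp Wn x) K hne Prop (fun j => j ∈ J) hφK _ himg
  have h0 : ∑ i ∈ K, ((Ts Wp Wn x i).card - 2) = 0 := by omega
  refine ⟨fun i0 => ⟨fun hh => ?_, hyp_of_K hrow hx⟩, fun i hi => ?_, hcl⟩
  · by_contra hi0
    obtain ⟨_, _, c, hc, _, hn⟩ := hyp_both hsign hrow hh
    obtain ⟨a, hp, hta, haJ⟩ := NP i0 c (mem_Ts.1 hc) hn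
    have hac : a ≠ c := by rintro rfl; exact not_both hsign hp hn
    let T : Fin m → Finset (Fin (n + 1)) := fun i => if i = i0 then {a, c} else Ts Wp Wn x i
    have hTK : ∀ i ∈ K, T i = Ts Wp Wn x i := by
      intro i hi
      have : i ≠ i0 := by rintro rfl; exact hi0 hi
      simp [T, this]
    have hT0 : T i0 = {a, c} := by simp [T]
    have hF2 := forest_count' hgen x T (insert i0 K) (by
      intro i hi
      rcases Finset.mem_insert.1 hi with rfl | hi
      · rw [hT0]
        refine ⟨⟨a, by simp⟩, fun j hj => ?_⟩
        simp only [Finset.mem_insert, Finset.mem_singleton] at hj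
        rcases hj with rfl | rfl
        · exact hta
        · exact mem_Ts.1 hc
      · rw [hTK i hi]; exact hne i hi) Prop (fun j => j ∈ J) (by
      intro i hi
      rcases Finset.mem_insert.1 hi with rfl | hi
      · rw [hT0]
        intro u hu v hv
        simp only [Finset.mem_insert, Finset.mem_singleton] at hu hv
        apply propext
        rcases hu with rfl | rfl <;> rcases hv with rfl | rfl <;> tauto
      · rw [hTK i hi]; exact hφK i hi) _ himg
    rw [Finset.sum_insert hi0, Finset.sum_congr rfl (fun i hi => by rw [hTK i hi]), hT0,
      Finset.card_pair hac, Finset.card_insert_of_notMem hi0] at hF2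
    omega
  · have := hsingle i hi
    have := hc2 i hi
    omega

end Ctx

section Ctx2

variable {m n : ℕ} {Wp Wn : Fin m → Fin (n + 1) → TT}

theorem openseg (hsign : ∀ i j, min (Wp i j) (Wn i j) = ⊥)
    (hrow : ∀ i, ∃ j, max (Wp i j) (Wn i j) ≠ ⊥)
    (hgen : TropGeneric (tmod Wp Wn)) {K : Finset (Fin m)} (hK : K.card + 1 = n)
    {ξ : Fin (n + 1) → ℝ} (J : Finset (Fin (n + 1)))
    (hJ0 : J ≠ ∅) (hJ1 : J ≠ Finset.univ) (μ : ℝ)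
    (hin : ∀ lam : ℝ, 0 ≤ lam → lam ≤ μ → toT (ξ + lam • eJ J) ∈ edgeEK Wp Wn K)
    (lam : ℝ) (h0 : 0 < lam) (h1 : lam < μ) :
    (∀ i, isHypNode Wp Wn (ξ + lam • eJ J) i ↔ i ∈ K) ∧
    (∀ i ∈ K, (Ts Wp Wn (ξ + lam • eJ J) i).card = 2) ∧
    ∀ i ∈ K, (∀ j, Tight (tmod Wp Wn i) (ξ + lam • eJ J) j → j ∈ J) ∨
      (∀ j, Tight (tmod Wp Wn i) (ξ + lam • eJ J) j → j ∉ J) := by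
  have hadd : ∀ δ : ℝ, ξ + lam • eJ J + δ • eJ J = ξ + (lam + δ) • eJ J := by
    intro δ; rw [add_smul, add_assoc]
  have hm1 := min_le_left lam (μ - lam)
  have hm2 := min_le_right lam (μ - lam)
  have hm0 : 0 < min lam (μ - lam) := lt_min h0 (by linarith)
  refine openpt hsign hrow hgen hK (hin lam h0.le h1.le) J hJ0 hJ1 (min lam (μ - lam)) hm0 ?_ ?_
  · rw [hadd]; exact hin _ (by linarith) (by linarith)
  · rw [hadd]; exact hin _ (by linarith) (by linarith)

theorem deg_three (hsign : ∀ i j, min (Wp i j) (Wn i j) = ⊥)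
    (hrow : ∀ i, ∃ j, max (Wp i j) (Wn i j) ≠ ⊥) {x : Fin (n + 1) → ℝ} {k : Fin m}
    (hk : deg21 Wp Wn x k ∨ deg12 Wp Wn x k) :
    isHypNode Wp Wn x k ∧ 3 ≤ (Ts Wp Wn x k).card := by
  have key : ∀ a b c, a ≠ b → a ≠ c → b ≠ c → isTEdge Wp Wn x k a → isTEdge Wp Wn x k b →
      isTEdge Wp Wn x k c → isHypNode Wp Wn x k ∧ 3 ≤ (Ts Wp Wn x k).card := by
    intro a b c h1 h2 h3 ha hb hc
    refine ⟨ha.1, ?_⟩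
    have : ({a, b, c} : Finset (Fin (n + 1))).card = 3 := Finset.card_eq_three.2
      ⟨a, b, c, h1, h2, h3, rfl⟩
    rw [← this]
    apply Finset.card_le_card
    intro z hz
    simp only [Finset.mem_insert, Finset.mem_singleton] at hz
    rcases hz with rfl | rfl | rfl
    · exact ((edge_iff hrow).1 ha).2
    · exact ((edge_iff hrow).1 hb).2
    · exact ((edge_iff hrow).1 hc).2
  rcases hk with ⟨h2, c, hc, -⟩ | ⟨⟨c, hc, -⟩, h2⟩
  · obtain ⟨a, b, hab, he⟩ := Set.ncard_eq_two.1 h2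
    have ha : a ∈ degIn Wp Wn x k := by rw [he]; simp
    have hb : b ∈ degIn Wp Wn x k := by rw [he]; simp
    refine key a b c hab ?_ ?_ ha.1 hb.1 hc.1
    · rintro rfl; exact not_both hsign ha.2 hc.2
    · rintro rfl; exact not_both hsign hb.2 hc.2
  · obtain ⟨a, b, hab, he⟩ := Set.ncard_eq_two.1 h2
    have ha : a ∈ degOut Wp Wn x k := by rw [he]; simp
    have hb : b ∈ degOut Wp Wn x k := by rw [he]; simp
    refine key a b c hab ?_ ?_ ha.1 hb.1 hc.1
    · rintro rfl; exact not_both hsign hc.2 ha.2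
    · rintro rfl; exact not_both hsign hc.2 hb.2

theorem sup_facts (hsign : ∀ i j, min (Wp i j) (Wn i j) = ⊥) (ξ : Fin (n + 1) → ℝ)
    (J : Finset (Fin (n + 1))) (k : Fin m) (ℓ : Fin (n + 1)) (hℓJ : ℓ ∈ J) (r : ℝ)
    (hr : tmod Wp Wn k ℓ = (r : TT))
    (hm : ∀ j ∈ J, ∀ s : ℝ, tmod Wp Wn k j = (s : TT) → s + ξ j ≤ r + ξ ℓ)
    (hu : ∀ j ∈ J, ∀ s : ℝ, tmod Wp Wn k j = (s : TT) → r + ξ ℓ ≤ s + ξ j → j = ℓ)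
    (hk : isHypNode Wp Wn ξ k) :
    (tmod Wp Wn k ℓ + (ξ ℓ : TT) = J.sup fun j => tmod Wp Wn k j + (ξ j : TT)) ∧
    (∀ j ∈ J, (tmod Wp Wn k j + (ξ j : TT) = J.sup fun j' => tmod Wp Wn k j' + (ξ j' : TT)) →
        j = ℓ) ∧
    (lamP Wp k ξ J < lamM Wp Wn k ξ J ↔ Wp k ℓ ≠ ⊥) := by
  have hle : ∀ j ∈ J, tmod Wp Wn k j + (ξ j : TT) ≤ ((r + ξ ℓ : ℝ) : TT) := by
    intro j hj
    by_cases hb : tmod Wp Wn k j = ⊥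
    · rw [hb, WithBot.bot_add]; exact bot_le
    · obtain ⟨s, hs⟩ := WithBot.ne_bot_iff_exists.mp hb
      rw [← hs]
      exact_mod_cast hm j hj s hs.symm
  have heℓ : tmod Wp Wn k ℓ + (ξ ℓ : TT) = ((r + ξ ℓ : ℝ) : TT) := by rw [hr]; rfl
  have hequ : ∀ j ∈ J, tmod Wp Wn k j + (ξ j : TT) = ((r + ξ ℓ : ℝ) : TT) → j = ℓ := by
    intro j hj he
    by_cases hb : tmod Wp Wn k j = ⊥
    · rw [hb, WithBot.bot_add] at he; exact absurd he.symm WithBot.coe_ne_bot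
    · obtain ⟨s, hs⟩ := WithBot.ne_bot_iff_exists.mp hb
      refine hu j hj s hs.symm ?_
      rw [← hs] at he
      have : s + ξ j = r + ξ ℓ := by exact_mod_cast he
      exact this.ge
  have hsup : (J.sup fun j => tmod Wp Wn k j + (ξ j : TT)) = ((r + ξ ℓ : ℝ) : TT) := by
    apply le_antisymm (Finset.sup_le hle)
    rw [← heℓ]
    exact Finset.le_sup (f := fun j => tmod Wp Wn k j + (ξ j : TT)) hℓJ
  refine ⟨by rw [hsup, heℓ], fun j hj he => hequ j hj (he.trans hsup), ?_⟩
  obtain ⟨j0, r0, -, ht⟩ := tdot_exists ξ hk.2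
  unfold lamP lamM
  rw [ht, lam_lt]
  have strict : ∀ V : Fin m → Fin (n + 1) → TT, (∀ j, V k j ≤ tmod Wp Wn k j) → V k ℓ = ⊥ →
      (J.sup fun j => V k j + (ξ j : TT)) < ((r + ξ ℓ : ℝ) : TT) := by
    intro V hV hb
    rw [Finset.sup_lt_iff (WithBot.bot_lt_coe _)]
    intro j hj
    by_cases hjl : j = ℓ
    · subst hjl
      rw [hb, WithBot.bot_add]; exact WithBot.bot_lt_coe _
    · have h1 : V k j + (ξ j : TT) ≤ tmod Wp Wn k j + (ξ j : TT) := by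
        gcongr; exact hV j
      exact lt_of_le_of_lt h1 (lt_of_le_of_ne (hle j hj) fun h => hjl (hequ j hj h))
  have big : ∀ V : Fin m → Fin (n + 1) → TT, V k ℓ = tmod Wp Wn k ℓ →
      ((r + ξ ℓ : ℝ) : TT) ≤ (J.sup fun j => V k j + (ξ j : TT)) := by
    intro V hV
    rw [← heℓ, ← hV]
    exact Finset.le_sup (f := fun j => V k j + (ξ j : TT)) hℓJ
  constructor
  · intro hlt hb
    have hn : Wn k ℓ ≠ ⊥ := by
      intro h
      simp [tmod, hb, h] at hr
    have h1 := strict Wp (fun j => le_max_left _ _) hb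
    have h2 := big Wn (tmod_n hsign k ℓ hn).symm
    exact absurd (h1.trans_le h2) (not_lt.2 hlt.le)
  · intro hp
    have hn : Wn k ℓ = ⊥ := (min_eq_bot.mp (hsign k ℓ)).resolve_left hp
    exact (strict Wn (fun j => le_max_right _ _) hn).trans_le (big Wp (tmod_p hsign k ℓ hp).symm)

theorem reach_eq (hgen : TropGeneric (tmod Wp Wn)) {K : Finset (Fin m)} (hK : K.card + 1 = n)
    (x : Fin (n + 1) → ℝ) (J : Finset (Fin (n + 1))) (hJ1 : J ≠ Finset.univ)
    (hc2 : ∀ i ∈ K, (Ts Wp Wn x i).card = 2)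
    (hcl : ∀ i ∈ K, (∀ j, Tight (tmod Wp Wn i) x j → j ∈ J) ∨
      (∀ j, Tight (tmod Wp Wn i) x j → j ∉ J))
    (y : Fin (n + 1) → ℝ) (k : Fin m) (jl : Fin (n + 1))
    (hE : ∀ i j, (isTEdge Wp Wn y i j ∧ ¬ (i = k ∧ j = jl)) ↔ (i ∈ K ∧ j ∈ Ts Wp Wn x i))
    (hkK : k ∈ K) (ℓ : Fin (n + 1)) (hℓ : ℓ ∈ Ts Wp Wn x k) (hℓJ : ℓ ∈ J) :
    J = reachJ Wp Wn y k jl := by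
  have adj : ∀ i ∈ K, ∀ j ∈ Ts Wp Wn x i,
      (delEdge Wp Wn y k jl).Adj (Sum.inl i) (Sum.inr j) := by
    intro i hi j hj
    obtain ⟨h1, h2⟩ := (hE i j).2 ⟨hi, hj⟩
    rw [delEdge, SimpleGraph.fromRel_adj]
    refine ⟨by simp, Or.inl ⟨h1, ?_⟩⟩
    simpa using h2
  have adj_inv : ∀ i j, (delEdge Wp Wn y k jl).Adj (Sum.inl i) (Sum.inr j) →
      i ∈ K ∧ j ∈ Ts Wp Wn x i := by
    intro i j h
    rw [delEdge, SimpleGraph.fromRel_adj] at h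
    rcases h.2 with h | h
    · exact (hE i j).1 ⟨h.1, by simpa using h.2⟩
    · exact h.1.elim
  have adj_ll : ∀ i j, ¬ (delEdge Wp Wn y k jl).Adj (Sum.inl i) (Sum.inl j) := by
    intro i j h
    rw [delEdge, SimpleGraph.fromRel_adj] at h
    rcases h.2 with h | h <;> exact h.1.elim
  have adj_rr : ∀ i j, ¬ (delEdge Wp Wn y k jl).Adj (Sum.inr i) (Sum.inr j) := by
    intro i j h
    rw [delEdge, SimpleGraph.fromRel_adj] at h
    rcases h.2 with h | h <;> exact h.1.elim
  have memS : ∀ l, l ∈ reachJ Wp Wn y k jl ↔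
      (delEdge Wp Wn y k jl).Reachable (Sum.inl k) (Sum.inr l) := by
    intro l; simp [reachJ]
  have hsub : reachJ Wp Wn y k jl ⊆ J := by
    intro l hl
    rw [memS, SimpleGraph.reachable_iff_reflTransGen] at hl
    let P : TGV m n → Prop := fun v => match v with
      | Sum.inl i => i ∈ K ∧ ∀ j, Tight (tmod Wp Wn i) x j → j ∈ J
      | Sum.inr j => j ∈ J
    have hP : ∀ v, Relation.ReflTransGen (delEdge Wp Wn y k jl).Adj (Sum.inl k) v → P v := by
      intro v hv
      induction hv with
      | refl =>
        exact ⟨hkK, (hcl k hkK).resolve_right fun h => h ℓ (mem_Ts.1 hℓ) hℓJ⟩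
      | @tail u v _ huv ih =>
        rcases u with i | j <;> rcases v with i' | j'
        · exact (adj_ll _ _ huv).elim
        · exact ih.2 j' (mem_Ts.1 (adj_inv _ _ huv).2)
        · obtain ⟨h1, h2⟩ := adj_inv _ _ huv.symm
          exact ⟨h1, (hcl i' h1).resolve_right fun h => h j (mem_Ts.1 h2) ih⟩
        · exact (adj_rr _ _ huv).elim
    exact hP _ hl
  have hℓS : ℓ ∈ reachJ Wp Wn y k jl := (memS ℓ).2 (adj k hkK ℓ hℓ).reachable
  refine Finset.Subset.antisymm (fun z hz => ?_) hsub
  by_contra hzS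
  have hb : ∃ b, b ∉ J := by
    by_contra h
    push Not at h
    exact hJ1 (Finset.eq_univ_iff_forall.2 h)
  obtain ⟨b, hb⟩ := hb
  have hbS : b ∉ reachJ Wp Wn y k jl := fun h => hb (hsub h)
  have hcard : ({(True, True), (True, False), (False, False)} : Finset (Prop × Prop)).card = 3 :=
    Finset.card_eq_three.2 ⟨_, _, _, by simp, by simp, by simp, rfl⟩
  have hF := forest_count' hgen x (Ts Wp Wn x) K
    (fun i hi => ⟨Finset.card_pos.1 (by rw [hc2 i hi]; omega), fun j hj => mem_Ts.1 hj⟩)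
    (Prop × Prop) (fun v => (v ∈ J, v ∈ reachJ Wp Wn y k jl))
    (by
      intro i hi u hu v hv
      refine Prod.ext ?_ ?_
      · rcases hcl i hi with h | h
        · exact propext (iff_of_true (h u (mem_Ts.1 hu)) (h v (mem_Ts.1 hv)))
        · exact propext (iff_of_false (h u (mem_Ts.1 hu)) (h v (mem_Ts.1 hv)))
      · apply propext
        have h1 := (adj i hi u hu).reachable
        have h2 := (adj i hi v hv).reachable
        show u ∈ reachJ Wp Wn y k jl ↔ v ∈ reachJ Wp Wn y k jl
        rw [memS, memS]
        exact ⟨fun h => h.trans (h1.symm.trans h2), fun h => h.trans (h2.symm.trans h1)⟩)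
    {(True, True), (True, False), (False, False)}
    (by
      intro p hp
      simp only [Finset.mem_insert, Finset.mem_singleton] at hp
      rcases hp with rfl | rfl | rfl
      · exact ⟨ℓ, by simp [hℓJ, hℓS]⟩
      · exact ⟨z, by simp [hz, hzS]⟩
      · exact ⟨b, by simp [hb, hbS]⟩)
  rw [hcard, Finset.sum_congr rfl hc2, Finset.sum_const, smul_eq_mul] at hF
  omega

end Ctx2

set_option maxHeartbeats 4000000 in
/-- Updating the tangent digraph at a breakpoint `ξ'` of
`E_K`: (a) `D_{ξ'} = D_{]ξ,ξ'[} ∪ {a_ent}` where `a_ent` joins the node `k`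
of degree `(2,1)`/`(1,2)` and the unique `ℓc ∈ argmax_{j∈J}(|W|_{kj}+ξ_j)`,
oriented by comparing `λ⁺_k` and `λ⁻_k`; (b) `D_{]ξ',ξ''[} = D_{ξ'} ∖ {a_lev}`
where `a_lev` is the unique other arc at `k` with the same orientation;
(c) the next direction set `J'` is the set of coordinate nodes weakly
connected to `k` after deleting `a_lev`. -/
theorem stmt16 {m n : ℕ} (Wp Wn : Fin m → Fin (n + 1) → TT)
    (hsign : ∀ i j, min (Wp i j) (Wn i j) = ⊥)
    (hrow : ∀ i, ∃ j, max (Wp i j) (Wn i j) ≠ ⊥)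
    (hgen : TropGeneric (tmod Wp Wn))
    (hfin : ∀ x ∈ coneC Wp Wn, x ≠ (fun _ => (⊥ : TT)) → ∀ j, x j ≠ ⊥)
    (K : Finset (Fin m)) (hK : K.card + 1 = n)
    (hU : ∃ (er : Fin K.card → Fin m) (ec : Fin K.card → Fin (n + 1)),
      Function.Injective er ∧ (∀ a, er a ∈ K) ∧ Function.Injective ec ∧
      (∀ a, ec a ≠ Fin.last n) ∧ ⊥ < tper (fun a b => tmod Wp Wn (er a) (ec b)))
    (hEK : ∃ y : Fin (n + 1) → ℝ, toT y ∈ edgeEK Wp Wn K)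
    (ξ : Fin (n + 1) → ℝ) (J : Finset (Fin (n + 1))) (μ : ℝ)
    (hseg : IsOrdSeg Wp Wn K ξ J μ)
    (ξ' : Fin (n + 1) → ℝ) (hξ' : ξ' = ξ + μ • eJ J)
    (hbp : IsBreakpoint Wp Wn K ξ')
    (k : Fin m) (hk : deg21 Wp Wn ξ' k ∨ deg12 Wp Wn ξ' k)
    (J' : Finset (Fin (n + 1))) (μ' : ℝ)
    (hseg' : IsOrdSeg Wp Wn K ξ' J' μ') (hJJ' : J ⊂ J') :
    ∃ ℓc : Fin (n + 1), ℓc ∈ J ∧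
      (tmod Wp Wn k ℓc + (ξ ℓc : TT) = J.sup fun j => tmod Wp Wn k j + (ξ j : TT)) ∧
      (∀ j ∈ J,
        (tmod Wp Wn k j + (ξ j : TT) = J.sup fun j' => tmod Wp Wn k j' + (ξ j' : TT)) →
        j = ℓc) ∧
      (∀ lam : ℝ, 0 < lam → lam < μ → ∀ u v,
        arcRel Wp Wn ξ' u v ↔
          (arcRel Wp Wn (ξ + lam • eJ J) u v ∨
           (lamP Wp k ξ J < lamM Wp Wn k ξ J ∧ u = Sum.inr ℓc ∧ v = Sum.inl k) ∨
           (¬ lamP Wp k ξ J < lamM Wp Wn k ξ J ∧ u = Sum.inl k ∧ v = Sum.inr ℓc))) ∧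
      ∃ jlev : Fin (n + 1), jlev ≠ ℓc ∧
        ((lamP Wp k ξ J < lamM Wp Wn k ξ J →
           arcRel Wp Wn ξ' (Sum.inr jlev) (Sum.inl k) ∧
           ∀ j, j ≠ ℓc → arcRel Wp Wn ξ' (Sum.inr j) (Sum.inl k) → j = jlev) ∧
         (¬ lamP Wp k ξ J < lamM Wp Wn k ξ J →
           arcRel Wp Wn ξ' (Sum.inl k) (Sum.inr jlev) ∧
           ∀ j, j ≠ ℓc → arcRel Wp Wn ξ' (Sum.inl k) (Sum.inr j) → j = jlev)) ∧
        (∀ lam' : ℝ, 0 < lam' → lam' < μ' → ∀ u v,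
          arcRel Wp Wn (ξ' + lam' • eJ J') u v ↔
            (arcRel Wp Wn ξ' u v ∧
             ¬((u = Sum.inr jlev ∧ v = Sum.inl k) ∨
               (u = Sum.inl k ∧ v = Sum.inr jlev)))) ∧
        J' = reachJ Wp Wn ξ' k jlev := by
  obtain ⟨hμ, hJ0, hJ1, hin, -, -⟩ := hseg
  obtain ⟨hμ', hJ0', hJ1', hin', -, -⟩ := hseg'
  have hx' : toT ξ' ∈ edgeEK Wp Wn K := by
    have := hin' 0 le_rfl hμ'.le
    simpa using this
  have hx0 : toT ξ ∈ edgeEK Wp Wn K := by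
    have := hin 0 le_rfl hμ.le
    simpa using this
  have OP := openseg hsign hrow hgen hK J hJ0 hJ1 μ hin
  have OP' := openseg hsign hrow hgen hK J' hJ0' hJ1' μ' hin'
  obtain ⟨hkh, hk3⟩ := deg_three hsign hrow hk
  obtain ⟨hkK, hhyp, hkc, hoc⟩ := bpt hsign hrow hgen hK hx' k hkh hk3
  -- comparison of tight sets
  have R1 : ∀ lam, 0 < lam → lam < μ → ∀ i ∈ K,
      Ts Wp Wn (ξ + lam • eJ J) i ⊆ Ts Wp Wn ξ' i ∧
      ∀ j ∈ Ts Wp Wn ξ' i, j ∉ Ts Wp Wn (ξ + lam • eJ J) i →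
        j ∈ J ∧ ∀ l ∈ Ts Wp Wn (ξ + lam • eJ J) i, l ∉ J := by
    intro lam h0 h1 i hi
    have hadd : ∀ δ : ℝ, ξ + lam • eJ J + δ • eJ J = ξ + (lam + δ) • eJ J := by
      intro δ; rw [add_smul, add_assoc]
    have := row_up (w := tmod Wp Wn i) (hrow i) (ξ + lam • eJ J) J (μ - lam) (by linarith) (by
      intro δ hd0 hd1
      rw [hadd]
      exact (OP (lam + δ) (by linarith) (by linarith)).2.2 i hi)
    have he : ξ + lam • eJ J + (μ - lam) • eJ J = ξ' := by
      rw [hadd, hξ']; congr 2; ring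
    rw [he] at this
    simp only [mem_Ts]
    exact ⟨fun j hj => mem_Ts.2 (this.1 j (mem_Ts.1 hj)), this.2⟩
  have R2 : ∀ lam, 0 < lam → lam < μ' → ∀ i ∈ K,
      Ts Wp Wn (ξ' + lam • eJ J') i ⊆ Ts Wp Wn ξ' i ∧
      ∀ j ∈ Ts Wp Wn ξ' i, j ∉ Ts Wp Wn (ξ' + lam • eJ J') i →
        j ∉ J' ∧ ∀ l ∈ Ts Wp Wn (ξ' + lam • eJ J') i, l ∈ J' := by
    intro lam h0 h1 i hi
    have := row_down (w := tmod Wp Wn i) (hrow i) ξ' J' lam h0 (by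
      intro δ hd0 hd1
      exact (OP' δ (by linarith) (by linarith)).2.2 i hi)
    simp only [mem_Ts]
    exact ⟨fun j hj => mem_Ts.2 (this.1 j (mem_Ts.1 hj)), this.2⟩
  have S1 : ∀ lam, 0 < lam → lam < μ → ∃ z ∈ J,
      insert z (Ts Wp Wn (ξ + lam • eJ J) k) = Ts Wp Wn ξ' k ∧
      ∀ l ∈ Ts Wp Wn (ξ + lam • eJ J) k, l ∉ J := by
    intro lam h0 h1
    obtain ⟨ha, hb⟩ := R1 lam h0 h1 k hkK
    obtain ⟨z, hz, hze⟩ := Finset.exists_eq_insert_iff.2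
      ⟨ha, by rw [(OP lam h0 h1).2.1 k hkK, hkc]⟩
    obtain ⟨hz1, hz2⟩ := hb z (hze ▸ Finset.mem_insert_self _ _) hz
    exact ⟨z, hz1, hze, hz2⟩
  have S2 : ∀ lam, 0 < lam → lam < μ' → ∃ z, z ∉ J' ∧
      insert z (Ts Wp Wn (ξ' + lam • eJ J') k) = Ts Wp Wn ξ' k ∧
      ∀ l ∈ Ts Wp Wn (ξ' + lam • eJ J') k, l ∈ J' := by
    intro lam h0 h1
    obtain ⟨ha, hb⟩ := R2 lam h0 h1 k hkK
    obtain ⟨z, hz, hze⟩ := Finset.exists_eq_insert_iff.2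
      ⟨ha, by rw [(OP' lam h0 h1).2.1 k hkK, hkc]⟩
    obtain ⟨hz1, hz2⟩ := hb z (hze ▸ Finset.mem_insert_self _ _) hz
    exact ⟨z, hz1, hze, hz2⟩
  obtain ⟨ℓ, hℓJ, hℓe, hℓd⟩ := S1 (μ / 2) (by linarith) (by linarith)
  obtain ⟨jl, hjlJ, hjle, hjld⟩ := S2 (μ' / 2) (by linarith) (by linarith)
  have hℓT : ℓ ∈ Ts Wp Wn ξ' k := hℓe ▸ Finset.mem_insert_self _ _
  have hjT : jl ∈ Ts Wp Wn ξ' k := hjle ▸ Finset.mem_insert_self _ _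
  have hℓu : ∀ j ∈ Ts Wp Wn ξ' k, j ∈ J → j = ℓ := by
    intro j hj hjJ
    rw [← hℓe, Finset.mem_insert] at hj
    exact hj.resolve_right fun h => hℓd j h hjJ
  have hju : ∀ j ∈ Ts Wp Wn ξ' k, j ∉ J' → j = jl := by
    intro j hj hjJ
    rw [← hjle, Finset.mem_insert] at hj
    exact hj.resolve_right fun h => hjJ (hjld j h)
  have hne : jl ≠ ℓ := by
    rintro rfl
    exact hjlJ (hJJ'.1 hℓJ)
  -- edges
  have E1 : ∀ lam, 0 < lam → lam < μ → ∀ i j, isTEdge Wp Wn ξ' i j ↔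
      (isTEdge Wp Wn (ξ + lam • eJ J) i j ∨ (i = k ∧ j = ℓ)) := by
    intro lam h0 h1 i j
    rw [edge_iff hrow, edge_iff hrow, hhyp, (OP lam h0 h1).1]
    by_cases hik : i = k
    · subst hik
      obtain ⟨z, hzJ, hze, hzd⟩ := S1 lam h0 h1
      have hz : z = ℓ := hℓu z (hze ▸ Finset.mem_insert_self _ _) hzJ
      subst hz
      rw [← hze, Finset.mem_insert]
      tauto
    · by_cases hi : i ∈ K
      · have he := Finset.eq_of_subset_of_card_le (R1 lam h0 h1 i hi).1
          (by rw [hoc i hi hik, (OP lam h0 h1).2.1 i hi])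
        rw [he]; tauto
      · tauto
  have E2 : ∀ lam, 0 < lam → lam < μ' → ∀ i j, isTEdge Wp Wn (ξ' + lam • eJ J') i j ↔
      (isTEdge Wp Wn ξ' i j ∧ ¬ (i = k ∧ j = jl)) := by
    intro lam h0 h1 i j
    rw [edge_iff hrow, edge_iff hrow, hhyp, (OP' lam h0 h1).1]
    by_cases hik : i = k
    · subst hik
      obtain ⟨z, hzJ, hze, hzd⟩ := S2 lam h0 h1
      have hz : z = jl := hju z (hze ▸ Finset.mem_insert_self _ _) hzJ
      subst hz
      have hzn : j ∈ Ts Wp Wn (ξ' + lam • eJ J') i → j ≠ z := by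
        rintro h rfl; exact hzJ (hzd _ h)
      rw [← hze, Finset.mem_insert]
      tauto
    · by_cases hi : i ∈ K
      · have he := Finset.eq_of_subset_of_card_le (R2 lam h0 h1 i hi).1
          (by rw [hoc i hi hik, (OP' lam h0 h1).2.1 i hi])
        rw [he]; tauto
      · tauto
  -- the maximum over J at ξ
  obtain ⟨rℓ, hrℓ, hmℓ⟩ := mem_Ts.1 hℓT
  have hmJ : ∀ j ∈ J, ∀ s : ℝ, tmod Wp Wn k j = (s : TT) → s + ξ j ≤ rℓ + ξ ℓ := by
    intro j hj s hs
    have := hmℓ j s hs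
    rw [hξ', eJ_mem hj, eJ_mem hℓJ] at this
    linarith
  have hmJu : ∀ j ∈ J, ∀ s : ℝ, tmod Wp Wn k j = (s : TT) → rℓ + ξ ℓ ≤ s + ξ j → j = ℓ := by
    intro j hj s hs hle
    refine hℓu j (mem_Ts.2 ⟨s, hs, fun l t ht => (hmℓ l t ht).trans ?_⟩) hj
    rw [hξ', eJ_mem hj, eJ_mem hℓJ]
    linarith
  obtain ⟨tsup, htu, hpos⟩ := sup_facts hsign ξ J k ℓ hℓJ rℓ hrℓ hmJ hmJu
    (hyp_of_K hrow hx0 hkK)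
  -- signs
  obtain ⟨a, ha, c, hc, hap, hcn⟩ := hyp_both hsign hrow
    (((OP (μ / 2) (by linarith) (by linarith)).1 k).2 hkK)
  obtain ⟨a', ha', c', hc', hap', hcn'⟩ := hyp_both hsign hrow
    (((OP' (μ' / 2) (by linarith) (by linarith)).1 k).2 hkK)
  have hac : a ≠ c := by rintro rfl; exact not_both hsign hap hcn
  have hTx : Ts Wp Wn (ξ + (μ / 2) • eJ J) k = {a, c} := by
    symm
    apply Finset.eq_of_subset_of_card_le
    · intro z hz
      simp only [Finset.mem_insert, Finset.mem_singleton] at hz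
      rcases hz with rfl | rfl <;> assumption
    · rw [(OP (μ / 2) (by linarith) (by linarith)).2.1 k hkK, Finset.card_pair hac]
  have hT3 : ∀ j, j ∈ Ts Wp Wn ξ' k ↔ j = ℓ ∨ j = a ∨ j = c := by
    intro j
    rw [← hℓe, hTx]; simp
  have hTx' : ∀ j, j ∈ Ts Wp Wn (ξ' + (μ' / 2) • eJ J') k → j ≠ jl := by
    rintro j h rfl; exact hjlJ (hjld _ h)
  have ha'3 := (hT3 a').1 (hjle ▸ Finset.mem_insert_of_mem ha')
  have hc'3 := (hT3 c').1 (hjle ▸ Finset.mem_insert_of_mem hc')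
  have hjl3 := (hT3 jl).1 hjT
  have ha'j := hTx' a' ha'
  have hc'j := hTx' c' hc'
  have hpn : ∀ j, Wp k j ≠ ⊥ → Wn k j ≠ ⊥ → False := fun j => not_both hsign
  have hℓs := tight_or (mem_Ts.1 hℓT)
  have hℓs' := hpn ℓ
  -- same orientation
  have hP : Wp k ℓ ≠ ⊥ → jl = a := by
    intro h
    rcases hjl3 with h1 | h1 | h1
    · exact absurd h1 hne
    · exact h1
    · exfalso
      rcases hc'3 with h2 | h2 | h2
      · exact hpn c' (h2 ▸ h) hcn'
      · exact hpn c' (h2 ▸ hap) hcn'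
      · exact hc'j (h2.trans h1.symm)
  have hN : Wn k ℓ ≠ ⊥ → jl = c := by
    intro h
    rcases hjl3 with h1 | h1 | h1
    · exact absurd h1 hne
    · exfalso
      rcases ha'3 with h2 | h2 | h2
      · exact hpn a' hap' (h2 ▸ h)
      · exact ha'j (h2.trans h1.symm)
      · exact hpn a' hap' (h2 ▸ hcn)
    · exact h1
  have hedgek : ∀ j, isTEdge Wp Wn ξ' k j ↔ j ∈ Ts Wp Wn ξ' k := by
    intro j
    rw [edge_iff hrow, hhyp]; simp [hkK]
  refine ⟨ℓ, hℓJ, tsup, htu, ?_, jl, hne, ⟨?_, ?_⟩, ?_, ?_⟩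
  · intro lam h0 h1 u v
    rw [hpos]
    rcases u with i | j <;> rcases v with i' | j'
    · simp [arcRel]
    · simp only [arcRel, E1 lam h0 h1 i j', Sum.inl.injEq, Sum.inr.injEq, reduceCtorEq,
        false_and, and_false, false_or]
      constructor
      · rintro ⟨h | ⟨rfl, rfl⟩, h2⟩
        · exact Or.inl ⟨h, h2⟩
        · exact Or.inr ⟨fun h => hpn _ h h2, rfl, rfl⟩
      · rintro (⟨h, h2⟩ | ⟨h, rfl, rfl⟩)
        · exact ⟨Or.inl h, h2⟩
        · exact ⟨Or.inr ⟨rfl, rfl⟩, hℓs.resolve_left h⟩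
    · simp only [arcRel, E1 lam h0 h1 i' j, Sum.inl.injEq, Sum.inr.injEq, reduceCtorEq,
        false_and, and_false, or_false]
      constructor
      · rintro ⟨h | ⟨rfl, rfl⟩, h2⟩
        · exact Or.inl ⟨h, h2⟩
        · exact Or.inr ⟨h2, rfl, rfl⟩
      · rintro (⟨h, h2⟩ | ⟨h, rfl, rfl⟩)
        · exact ⟨Or.inl h, h2⟩
        · exact ⟨Or.inr ⟨rfl, rfl⟩, h⟩
    · simp [arcRel]
  · intro hlt
    have hp := hpos.1 hlt
    have hja := hP hp
    refine ⟨⟨(hedgek jl).2 hjT, hja ▸ hap⟩, fun j hj hj2 => ?_⟩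
    rcases (hT3 j).1 ((hedgek j).1 hj2.1) with h | h | h
    · exact absurd h hj
    · exact h.trans hja.symm
    · exact absurd hcn (fun h' => hpn j hj2.2 (h ▸ h'))
  · intro hlt
    have hn : Wn k ℓ ≠ ⊥ := hℓs.resolve_left fun h => hlt (hpos.2 h)
    have hja := hN hn
    refine ⟨⟨(hedgek jl).2 hjT, hja ▸ hcn⟩, fun j hj hj2 => ?_⟩
    rcases (hT3 j).1 ((hedgek j).1 hj2.1) with h | h | h
    · exact absurd h hj
    · exact absurd hap (fun h' => hpn j (h ▸ h') hj2.2)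
    · exact h.trans hja.symm
  · intro lam h0 h1 u v
    rcases u with i | j <;> rcases v with i' | j'
    · simp [arcRel]
    · simp only [arcRel, E2 lam h0 h1 i j', Sum.inl.injEq, Sum.inr.injEq, reduceCtorEq,
        false_and, false_or]
      clear * -
      tauto
    · simp only [arcRel, E2 lam h0 h1 i' j, Sum.inl.injEq, Sum.inr.injEq, reduceCtorEq,
        false_and, or_false]
      clear * -
      tauto
    · simp [arcRel]
  · obtain ⟨hh, hc2, hcl⟩ := OP' (μ' / 2) (by linarith) (by linarith)
    refine reach_eq hgen hK (ξ' + (μ' / 2) • eJ J') J' hJ1' hc2 hcl ξ' k jl ?_ hkK ℓ ?_ (hJJ'.1 hℓJ)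
    · intro i j
      rw [← E2 (μ' / 2) (by linarith) (by linarith), edge_iff hrow, hh]
    · have := (E2 (μ' / 2) (by linarith) (by linarith) k ℓ).2
        ⟨(hedgek ℓ).2 hℓT, fun h => hne h.2.symm⟩
      exact ((edge_iff hrow).1 this).2
end
end

section
/- Let [ξ, ξ'] = {ξ + λe^J : 0 ≤ λ ≤ μ} and [ξ', ξ''] = {ξ' + λe^{J'} : 0 ≤ λ ≤ μ'} be two consecutive ordinary segments of the tropical edge E_K. Then: (i) B(ξ',J') ⊆ B(ξ,J); (ii) argmax_j(W⁺_{ij}+ξ'_j) = argmax_j(W⁺_{ij}+ξ_j) for all i ∈ Λ(ξ',J'); (iii) Λ(ξ',J') = {i ∈ Λ(ξ,J) : μ < λ⁺_i(ξ,J) and argmax_j(W⁺_{ij}+ξ_j) ∩ (J'∖J) = ∅}; (iv) for all i ∈ Λ(ξ',J') ∪ B(ξ',J'): Wᵢ⁺⊙ξ' = Wᵢ⁺⊙ξ, λ⁺_i(ξ',J') = min(λ⁺_i(ξ,J) − μ, (Wᵢ⁺⊙ξ) − max_{j∈J'∖J}(W⁺_{ij}+ξ_j)), and λ⁻_i(ξ',J')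 = min(λ⁻_i(ξ,J) − μ, (Wᵢ⁺⊙ξ) − max_{j∈J'∖J}(W⁻_{ij}+ξ_j)). -/
open scoped Classical

noncomputable section

theorem aux_le_tdot {n : ℕ} (w : Fin (n + 1) → TT) (x : Fin (n + 1) → ℝ) (j : Fin (n + 1)) :
    w j + (x j : TT) ≤ tdot w (toT x) :=
  Finset.le_sup (f := fun j => w j + toT x j) (Finset.mem_univ j)

theorem aux_in {n : ℕ} (ξ : Fin (n + 1) → ℝ) (J : Finset (Fin (n + 1))) (μ : ℝ)
    {j : Fin (n + 1)} (hj : j ∈ J) : (ξ + μ • eJ J) j = ξ j + μ := by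
  simp [eJ, hj]

theorem aux_out {n : ℕ} (ξ : Fin (n + 1) → ℝ) (J : Finset (Fin (n + 1))) (μ : ℝ)
    {j : Fin (n + 1)} (hj : j ∉ J) : (ξ + μ • eJ J) j = ξ j := by
  simp [eJ, hj]

theorem aux_mono {n : ℕ} (w : Fin (n + 1) → TT) (ξ : Fin (n + 1) → ℝ)
    (J : Finset (Fin (n + 1))) (μ : ℝ) (hμ : 0 < μ) (j : Fin (n + 1)) :
    w j + (ξ j : TT) ≤ w j + ((ξ + μ • eJ J) j : TT) := by
  by_cases hj : j ∈ J
  · rw [aux_in ξ J μ hj]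
    have : (ξ j : TT) ≤ ((ξ j + μ : ℝ) : TT) := WithBot.coe_le_coe.2 (by linarith)
    gcongr
  · rw [aux_out ξ J μ hj]

theorem aux_tmono {n : ℕ} (w : Fin (n + 1) → TT) (ξ : Fin (n + 1) → ℝ)
    (J : Finset (Fin (n + 1))) (μ : ℝ) (hμ : 0 < μ) :
    tdot w (toT ξ) ≤ tdot w (toT (ξ + μ • eJ J)) :=
  Finset.sup_le fun j _ => (aux_mono w ξ J μ hμ j).trans (aux_le_tdot w _ j)

theorem aux_eq {n : ℕ} (w : Fin (n + 1) → TT) (ξ : Fin (n + 1) → ℝ)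
    (J : Finset (Fin (n + 1))) (μ : ℝ) (hμ : 0 < μ)
    (h : ∀ j ∈ J, w j + ((ξ + μ • eJ J) j : TT) ≠ tdot w (toT (ξ + μ • eJ J))) :
    tdot w (toT (ξ + μ • eJ J)) = tdot w (toT ξ) := by
  refine le_antisymm ?_ (aux_tmono w ξ J μ hμ)
  obtain ⟨j, -, hj⟩ := Finset.exists_mem_eq_sup (Finset.univ : Finset (Fin (n + 1)))
    Finset.univ_nonempty (fun j => w j + toT (ξ + μ • eJ J) j)
  change tdot w (toT (ξ + μ • eJ J)) = w j + ((ξ + μ • eJ J) j : TT) at hj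
  have hJ : j ∉ J := fun hJ => h j hJ hj.symm
  rw [hj, aux_out ξ J μ hJ]
  exact aux_le_tdot w ξ j

theorem aux_arg {n : ℕ} (w : Fin (n + 1) → TT) (ξ : Fin (n + 1) → ℝ)
    (J : Finset (Fin (n + 1))) (μ : ℝ) (hμ : 0 < μ)
    (h : ∀ j ∈ J, w j + ((ξ + μ • eJ J) j : TT) ≠ tdot w (toT (ξ + μ • eJ J)))
    (j : Fin (n + 1)) :
    w j + ((ξ + μ • eJ J) j : TT) = tdot w (toT (ξ + μ • eJ J)) ↔
      w j + (ξ j : TT) = tdot w (toT ξ) := by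
  have he := aux_eq w ξ J μ hμ h
  by_cases hj : j ∈ J
  · refine ⟨fun h' => absurd h' (h j hj), fun h' => absurd ?_ (h j hj)⟩
    refine le_antisymm (aux_le_tdot w _ j) ?_
    rw [he, ← h']
    exact aux_mono w ξ J μ hμ j
  · rw [he, aux_out ξ J μ hj]

theorem aux_supadd {n : ℕ} (w : Fin (n + 1) → TT) (ξ : Fin (n + 1) → ℝ)
    (J : Finset (Fin (n + 1))) (μ : ℝ) :
    (J.sup fun j => w j + ((ξ + μ • eJ J) j : TT)) =
      (J.sup fun j => w j + (ξ j : TT)) + (μ : TT) := by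
  rw [Finset.apply_sup_eq_sup_comp_of_linearOrder (fun x : TT => x + (μ : TT))
    (fun a b hab => by dsimp only; gcongr) (by simp)]
  refine Finset.sup_congr rfl fun j hj => ?_
  rw [aux_in ξ J μ hj]
  simp [add_assoc]

theorem aux_sup {n : ℕ} (w : Fin (n + 1) → TT) (ξ : Fin (n + 1) → ℝ)
    (J J' : Finset (Fin (n + 1))) (μ : ℝ) (hJ : J ⊆ J') :
    (J'.sup fun j => w j + ((ξ + μ • eJ J) j : TT)) =
      max ((J.sup fun j => w j + (ξ j : TT)) + (μ : TT))
        ((J' \ J).sup fun j => w j + (ξ j : TT)) := by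
  conv_lhs => rw [← Finset.union_sdiff_of_subset hJ]
  rw [Finset.sup_union, aux_supadd]
  congr 1
  refine Finset.sup_congr rfl fun j hj => ?_
  rw [aux_out ξ J μ (Finset.mem_sdiff.1 hj).2]

theorem tE_coe (r : ℝ) : tE (r : TT) = (r : EReal) := rfl
theorem tE_bot : tE (⊥ : TT) = ⊥ := rfl

theorem aux_min (p s t : TT) (hp : p ≠ ⊥) (μ : ℝ) :
    tE p - tE (max (s + (μ : TT)) t) = min (tE p - tE s - (μ : EReal)) (tE p - tE t) := by
  induction p using WithBot.recBotCoe with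
  | bot => exact absurd rfl hp
  | coe p =>
  induction s using WithBot.recBotCoe with
  | bot => 
    have h : ((p : EReal) - ⊥ - (μ : EReal)) = ⊤ := by
      rw [EReal.coe_sub_bot, EReal.top_sub_coe]
    simp [tE_coe, tE_bot, h]
  | coe s =>
  induction t using WithBot.recBotCoe with
  | bot => 
    rw [max_eq_left bot_le, tE_bot, tE_coe p, EReal.coe_sub_bot, min_eq_left le_top, ← WithBot.coe_add,
      tE_coe, tE_coe, ← EReal.coe_sub, ← EReal.coe_sub, ← EReal.coe_sub, sub_sub]
  | coe t =>
    rw [← WithBot.coe_add, ← WithBot.coe_max]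
    simp only [tE_coe, ← EReal.coe_sub]
    rw [← EReal.coe_strictMono.monotone.map_min, sub_sub, min_sub_sub_left]

theorem aux_lt (p s : TT) (hp : p ≠ ⊥) (μ : ℝ) :
    (μ : EReal) < tE p - tE s ↔ s + (μ : TT) < p := by
  induction p using WithBot.recBotCoe with
  | bot => exact absurd rfl hp
  | coe p =>
  induction s using WithBot.recBotCoe with
  | bot => simp [tE_coe, tE_bot, EReal.coe_sub_bot, WithBot.bot_lt_coe]
  | coe s =>
    rw [← WithBot.coe_add, tE_coe, tE_coe, ← EReal.coe_sub, EReal.coe_lt_coe_iff,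
      WithBot.coe_lt_coe]
    constructor <;> intro <;> linarith

theorem aux_ne_bot {n : ℕ} (w : Fin (n + 1) → TT) (ξ : Fin (n + 1) → ℝ)
    (J : Finset (Fin (n + 1))) (hJ : J ≠ ∅)
    (h : ∀ j ∈ J, w j + (ξ j : TT) ≠ tdot w (toT ξ)) : tdot w (toT ξ) ≠ ⊥ := by
  obtain ⟨j, hj⟩ := Finset.nonempty_iff_ne_empty.2 hJ
  exact ((bot_le).trans_lt ((aux_le_tdot w ξ j).lt_of_ne (h j hj))).ne'

theorem aux_lt_iff {n : ℕ} (w : Fin (n + 1) → TT) (ξ : Fin (n + 1) → ℝ)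
    (J J' : Finset (Fin (n + 1))) (μ : ℝ) (hμ : 0 < μ) (hJ : J ⊆ J') (hJ' : J' ≠ ∅) :
    (∀ j ∈ J', w j + ((ξ + μ • eJ J) j : TT) ≠ tdot w (toT (ξ + μ • eJ J))) ↔
      (∀ j ∈ J, w j + (ξ j : TT) ≠ tdot w (toT ξ)) ∧
      (μ : EReal) < tE (tdot w (toT ξ)) - tE (J.sup fun j => w j + (ξ j : TT)) ∧
      ∀ j ∈ J' \ J, w j + (ξ j : TT) ≠ tdot w (toT ξ) := by
  constructor
  · intro h
    have hh := fun j hj => h j (hJ hj)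
    have he := aux_eq w ξ J μ hμ hh
    have ha := aux_arg w ξ J μ hμ hh
    have h2 : ∀ j ∈ J', w j + (ξ j : TT) ≠ tdot w (toT ξ) :=
      fun j hj h' => h j hj ((ha j).2 h')
    have hb := aux_ne_bot w ξ J' hJ' h2
    refine ⟨fun j hj => h2 j (hJ hj), ?_, fun j hj => h2 j (Finset.mem_sdiff.1 hj).1⟩
    rw [aux_lt _ _ hb, ← aux_supadd, Finset.sup_lt_iff (bot_lt_iff_ne_bot.2 hb)]
    intro j hj
    rw [← he]
    exact (aux_le_tdot w _ j).lt_of_ne (hh j hj)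
  · rintro ⟨h1, h2, h3⟩
    have h4 : ∀ j ∈ J', w j + (ξ j : TT) ≠ tdot w (toT ξ) := fun j hj => by
      by_cases hjJ : j ∈ J
      · exact h1 j hjJ
      · exact h3 j (Finset.mem_sdiff.2 ⟨hj, hjJ⟩)
    have hb := aux_ne_bot w ξ J' hJ' h4
    rw [aux_lt _ _ hb, ← aux_supadd, Finset.sup_lt_iff (bot_lt_iff_ne_bot.2 hb)] at h2
    have h5 := aux_tmono w ξ J μ hμ
    have hh : ∀ j ∈ J, w j + ((ξ + μ • eJ J) j : TT) ≠ tdot w (toT (ξ + μ • eJ J)) :=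
      fun j hj => ((h2 j hj).trans_le h5).ne
    exact fun j hj h' => h4 j hj ((aux_arg w ξ J μ hμ hh j).1 h')

/-- Incremental update of the sets `Λ`, `B` and the scalars
`λ±` between two consecutive ordinary segments of `E_K`. -/
theorem stmt17 {m n : ℕ} (Wp Wn : Fin m → Fin (n + 1) → TT)
    (hsign : ∀ i j, min (Wp i j) (Wn i j) = ⊥)
    (hrow : ∀ i, ∃ j, max (Wp i j) (Wn i j) ≠ ⊥)
    (hgen : TropGeneric (tmod Wp Wn))
    (hfin : ∀ x ∈ coneC Wp Wn, x ≠ (fun _ => (⊥ : TT)) → ∀ j, x j ≠ ⊥)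
    (K : Finset (Fin m)) (hK : K.card + 1 = n)
    (hU : ∃ (er : Fin K.card → Fin m) (ec : Fin K.card → Fin (n + 1)),
      Function.Injective er ∧ (∀ a, er a ∈ K) ∧ Function.Injective ec ∧
      (∀ a, ec a ≠ Fin.last n) ∧ ⊥ < tper (fun a b => tmod Wp Wn (er a) (ec b)))
    (hEK : ∃ y : Fin (n + 1) → ℝ, toT y ∈ edgeEK Wp Wn K)
    (ξ : Fin (n + 1) → ℝ) (J : Finset (Fin (n + 1))) (μ : ℝ)
    (hseg : IsOrdSeg Wp Wn K ξ J μ)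
    (ξ' : Fin (n + 1) → ℝ) (hξ' : ξ' = ξ + μ • eJ J)
    (J' : Finset (Fin (n + 1))) (μ' : ℝ)
    (hseg' : IsOrdSeg Wp Wn K ξ' J' μ') (hJJ' : J ⊂ J') :
    brkSet Wp Wn K ξ' J' ⊆ brkSet Wp Wn K ξ J ∧
    (∀ i ∈ entSet Wp K ξ' J', argmaxP Wp i ξ' = argmaxP Wp i ξ) ∧
    entSet Wp K ξ' J' =
      {i | i ∈ entSet Wp K ξ J ∧ (μ : EReal) < lamP Wp i ξ J ∧
        ∀ j ∈ J' \ J, j ∉ argmaxP Wp i ξ} ∧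
    ∀ i, i ∈ entSet Wp K ξ' J' ∪ brkSet Wp Wn K ξ' J' →
      tdot (Wp i) (toT ξ') = tdot (Wp i) (toT ξ) ∧
      lamP Wp i ξ' J' =
        min (lamP Wp i ξ J - (μ : EReal))
          (tE (tdot (Wp i) (toT ξ)) -
            tE ((J' \ J).sup fun j => Wp i j + (ξ j : TT))) ∧
      lamM Wp Wn i ξ' J' =
        min (lamM Wp Wn i ξ J - (μ : EReal))
          (tE (tdot (Wp i) (toT ξ)) -
            tE ((J' \ J).sup fun j => Wn i j + (ξ j : TT))) := by
  subst hξ'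
  have hμ : 0 < μ := hseg.1
  have hJ : J ⊆ J' := hJJ'.1
  have hJ'ne : J' ≠ ∅ := hseg'.2.1
  refine ⟨?_, ?_, ?_, ?_⟩
  · rintro i ⟨hi, h1, h2⟩
    refine ⟨hi, fun j hj h => ?_, fun j hj h => ?_⟩
    · exact h1 j (hJ hj) ((aux_arg (Wp i) ξ J μ hμ (fun j hj => h1 j (hJ hj)) j).2 h)
    · exact h2 j (hJ hj) ((aux_arg (Wn i) ξ J μ hμ (fun j hj => h2 j (hJ hj)) j).2 h)
  · rintro i ⟨hi, h1⟩
    ext j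
    exact aux_arg (Wp i) ξ J μ hμ (fun j hj => h1 j (hJ hj)) j
  · ext i
    have := aux_lt_iff (Wp i) ξ J J' μ hμ hJ hJ'ne
    exact (and_congr_right fun _ => this).trans and_assoc.symm
  · intro i hi
    have h1 : ∀ j ∈ J', Wp i j + ((ξ + μ • eJ J) j : TT) ≠ tdot (Wp i) (toT (ξ + μ • eJ J)) := by
      rcases hi with hi | hi
      · exact hi.2
      · exact hi.2.1
    have he := aux_eq (Wp i) ξ J μ hμ (fun j hj => h1 j (hJ hj))
    have hb := aux_ne_bot _ _ J' hJ'ne h1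
    rw [he] at hb
    refine ⟨he, ?_, ?_⟩
    · unfold lamP
      rw [he, aux_sup _ _ _ _ _ hJ, aux_min _ _ _ hb]
    · unfold lamM
      rw [he, aux_sup _ _ _ _ _ hJ, aux_min _ _ _ hb]
end
end
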